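/- arXiv:1110.1144 — 2 statements merged into one kernel-verified Lean document; each statement's English description precedes it below -/
import Mathlib

section
/- The edge set of every simple graph on n vertices can be covered by at most n − 1 subgraphs, each of which is a cycle or a single edge. -/
namespace Pyb
variable {V : Type*}

/-- `a` and `b` are consecutive (in some order) in the list `l`. -/
def Cov (l : List V) (a b : V) : Prop := [a, b] <:+: l ∨ [b, a] <:+: l

/-- the two ends of a list -/
def loc (l : List V) (b : Bool) : Option V := if b then l.getLast? else l.head?

theorem Cov.symm {l : List V} {a b : V} (h : Cov l a b) : Cov l b a := Or.symm h

theorem cov_comm {l : List V} {a b : V} : Cov l a b ↔ Cov l b a := Or.comm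

theorem pair_infix_cons (c : V) (l : List V) (a b : V) :
    [a, b] <:+: c :: l ↔ (a = c ∧ l.head? = some b) ∨ [a, b] <:+: l := by
  rw [List.infix_cons_iff]
  cases l with
  | nil => simp
  | cons d l => simp [eq_comm]

theorem pair_infix_append (l₁ l₂ : List V) (a b : V) :
    [a, b] <:+: l₁ ++ l₂ ↔
      [a, b] <:+: l₁ ∨ [a, b] <:+: l₂ ∨ (l₁.getLast? = some a ∧ l₂.head? = some b) := by
  induction l₁ with
  | nil => simp
  | cons c l ih =>
    rw [List.cons_append, pair_infix_cons, ih, pair_infix_cons]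
    cases l with
    | nil => simp; grind
    | cons d l => simp [List.getLast?_cons_cons]; grind

theorem cov_reverse (l : List V) (a b : V) : Cov l.reverse a b ↔ Cov l a b := by
  have h : ∀ a b : V, [a, b] <:+: l.reverse ↔ [b, a] <:+: l := by
    intro a b
    rw [← List.reverse_infix]; simp
  unfold Cov
  rw [h, h]; exact Or.comm

theorem cov_append (l₁ l₂ : List V) (a b : V) :
    Cov (l₁ ++ l₂) a b ↔ Cov l₁ a b ∨ Cov l₂ a b ∨
      (l₁.getLast? = some a ∧ l₂.head? = some b) ∨ (l₁.getLast? = some b ∧ l₂.head? = some a) := by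
  unfold Cov
  rw [pair_infix_append, pair_infix_append]; tauto

theorem cov_cons (c : V) (l : List V) (a b : V) :
    Cov (c :: l) a b ↔ Cov l a b ∨ (a = c ∧ l.head? = some b) ∨ (b = c ∧ l.head? = some a) := by
  unfold Cov
  rw [pair_infix_cons, pair_infix_cons]; tauto

theorem not_cov_nil (a b : V) : ¬ Cov ([] : List V) a b := by
  simp [Cov]

theorem Cov.mem {l : List V} {a b : V} (h : Cov l a b) : a ∈ l ∧ b ∈ l := by
  rcases h with h | h <;> have := h.subset <;> simp at this <;> tauto

theorem Cov.ne {l : List V} {a b : V} (h : Cov l a b) (hn : l.Nodup) : a ≠ b := by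
  rcases h with h | h <;> have := hn.sublist h.sublist <;> simp at this <;> tauto

theorem PL (l : List V) (hn : l.Nodup) (hl : l ≠ []) (s : V) :
    ∃ nx : Bool → Option V,
      (∀ b w, nx b = some w → Cov l s w) ∧
      (∀ b b' w, nx b = some w → nx b' = some w → b = b') ∧
      (∀ w, Cov l s w → ∃ b, nx b = some w) ∧
      ∀ x : Bool → Prop, (∀ b, x b → loc l b ≠ some s) → ∃ l' : List V,
      (∀ a b, a ≠ s → b ≠ s → (Cov l' a b ↔ Cov l a b)) ∧
      (∀ w, Cov l' s w ↔ ∃ b, (x b ∧ loc l b = some w) ∨ (¬ x b ∧ nx b = some w)) ∧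
      (¬ (x false ∧ x true ∧ s ∉ l) → l' ≠ [] ∧ l'.Nodup ∧
        ∀ b, (x b → loc l' b = some ((nx b).getD s)) ∧ (¬ x b → loc l' b = loc l b)) ∧
      (x false → x true → s ∉ l → l' = s :: (l ++ [s])) := by
  classical
  by_cases hs : s ∈ l
  · obtain ⟨L, R, rfl⟩ := List.append_of_mem hs
    have hsL : s ∉ L := by
      intro h; rw [List.nodup_append] at hn; exact hn.2.2 s h s (by simp) rfl
    have hsR : s ∉ R := by
      intro h; rw [List.nodup_append] at hn; simp [h] at hn
    have hLR : ∀ w, w ∈ L → w ∉ R := by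
      intro w h h'; rw [List.nodup_append] at hn; exact hn.2.2 w h w (by simp [h']) rfl
    have hcs : ∀ (L R : List V), s ∉ L → s ∉ R → ∀ w, Cov (L ++ s :: R) s w ↔
        L.getLast? = some w ∨ R.head? = some w := by
      intro L R hL hR w
      rw [cov_append, cov_cons]
      have h1 : ¬ Cov L s w := fun h => hL h.mem.1
      have h2 : ¬ Cov R s w := fun h => hR h.mem.1
      have h3 : R.head? ≠ some s := fun h => hR (List.mem_of_head? h)
      have h4 : L.getLast? ≠ some s := fun h => hL (List.mem_of_getLast? h)
      simp [h1, h2, h3, h4]; tauto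
    have hcn : ∀ (L R : List V), ∀ a b, a ≠ s → b ≠ s → (Cov (L ++ s :: R) a b ↔
        Cov L a b ∨ Cov R a b) := by
      intro L R a b ha hb
      rw [cov_append, cov_cons]
      simp [ha, hb, ha.symm, hb.symm]
    refine ⟨fun b => if b then R.head? else L.getLast?, ?_, ?_, ?_, ?_⟩
    · intro b w h
      rw [hcs L R hsL hsR]
      cases b <;> simp at h <;> simp [h]
    · intro b b' w h h'
      cases b <;> cases b' <;> simp at h h' ⊢
      · exact hLR w (List.mem_of_getLast? h) (List.mem_of_head? h')
      · exact hLR w (List.mem_of_getLast? h') (List.mem_of_head? h)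
    · intro w h
      rw [hcs L R hsL hsR] at h
      rcases h with h | h
      · exact ⟨false, by simpa using h⟩
      · exact ⟨true, by simpa using h⟩
    · intro x hx
      set L' := if x false then L.reverse else L with hL'
      set R' := if x true then R.reverse else R with hR'
      have hsL' : s ∉ L' := by rw [hL']; split_ifs <;> simpa
      have hsR' : s ∉ R' := by rw [hR']; split_ifs <;> simpa
      have hpL : L'.Perm L := by
        rw [hL']; split_ifs
        · exact List.reverse_perm L
        · exact List.Perm.refl _
      have hpR : R'.Perm R := by
        rw [hR']; split_ifs
        · exact List.reverse_perm R
        · exact List.Perm.refl _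
      refine ⟨L' ++ s :: R', ?_, ?_, ?_, ?_⟩
      · intro a b ha hb
        rw [hcn _ _ a b ha hb, hcn _ _ a b ha hb]
        have h1 : Cov L' a b ↔ Cov L a b := by
          rw [hL']; split_ifs
          · exact cov_reverse L a b
          · rfl
        have h2 : Cov R' a b ↔ Cov R a b := by
          rw [hR']; split_ifs
          · exact cov_reverse R a b
          · rfl
        rw [h1, h2]
      · intro w
        rw [hcs L' R' hsL' hsR']
        simp only [Bool.exists_bool]
        have h0 := hx false
        have h1 := hx true
        apply or_congr
        · rw [hL']
          by_cases h : x false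
          · cases L with
            | nil => simp [loc, h] at h0
            | cons c L => simp [loc, h]
          · simp [h]
        · rw [hR']
          by_cases h : x true
          · rcases List.eq_nil_or_concat R with rfl | ⟨R, c, rfl⟩
            · simp [loc, h] at h1
            · simp [loc, h, List.getLast?_append, List.getLast?_cons]
          · simp [h]
      · intro _
        refine ⟨by simp, (List.Perm.nodup_iff (hpL.append (hpR.cons s))).2 hn, ?_⟩
        intro b
        have h0 := hx b
        cases b
        · constructor
          · intro h
            cases L with
            | nil => simp [loc, h] at h0
            | cons c L => 
              rw [hL', if_pos h]
              simp [loc, List.getLast?_cons]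
          · intro h
            rw [hL', if_neg h]
            cases L <;> simp [loc]
        · constructor
          · intro h
            rcases List.eq_nil_or_concat R with rfl | ⟨R, c, rfl⟩
            · simp [loc, h] at h0
            · rw [hR', if_pos h]
              cases R with
              | nil => simp [loc]
              | cons d R => simp [loc, List.getLast?_append, List.getLast?_cons]
          · intro h
            rw [hR', if_neg h]
            simp [loc, List.getLast?_append, List.getLast?_cons]
      · intro _ _ h; exact absurd hs h
  · have hc : ∀ w, ¬ Cov l s w := fun w h => hs h.mem.1
    have hc' : ∀ w, ¬ Cov l w s := fun w h => hs h.mem.2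
    have hh : l.head? ≠ some s := fun h => hs (List.mem_of_head? h)
    have hg : l.getLast? ≠ some s := fun h => hs (List.mem_of_getLast? h)
    refine ⟨fun _ => none, by simp, by simp, fun w h => absurd h (hc w), ?_⟩
    intro x hx
    refine ⟨(if x false then [s] else []) ++ l ++ (if x true then [s] else []), ?_, ?_, ?_, ?_⟩
    · intro a b ha hb
      split_ifs <;> simp [cov_append, cov_cons, not_cov_nil, ha, hb, ha.symm, hb.symm]
    · intro w
      simp only [Bool.exists_bool]
      by_cases h0 : x false <;> by_cases h1 : x true <;>
        simp [h0, h1, cov_append, cov_cons, not_cov_nil, hc, hh, hg, loc]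
      all_goals
        cases l with
        | nil => exact absurd rfl hl
        | cons c l => simp at *; try tauto
    · intro h
      cases l with
      | nil => exact absurd rfl hl
      | cons c l =>
      by_cases h0 : x false <;> by_cases h1 : x true
      · exact absurd ⟨h0, h1, hs⟩ h
      all_goals
        simp only [h0, h1, if_true, if_false]
        refine ⟨by simp, ?_, ?_⟩
        · first
            | simpa using hn
            | (simp [List.nodup_append] at hn hs ⊢; grind)
        · intro b
          cases b <;> simp [loc, h0, h1, List.getLast?_append, List.getLast?_cons]
    · intro h0 h1 _
      simp [h0, h1]
end Pyb

namespace Pyb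
variable {V : Type*}

/-- ends reachable from the base set of ends -/
inductive Reach {ι V : Type*} (nx : ι → Bool → Option V) (d : V → ι × Bool) (B : ι × Bool → Prop) :
    ι × Bool → Prop
  | base (e : ι × Bool) : B e → Reach nx d B e
  | step (e : ι × Bool) (w : V) : Reach nx d B e → nx e.1 e.2 = some w → Reach nx d B (d w)

theorem SM {ι : Type*} [Finite ι] (P : ι → List V) (hne : ∀ i, P i ≠ []) (hnd : ∀ i, (P i).Nodup)
    (hU : ∀ i j a b, Cov (P i) a b → Cov (P j) a b → i = j) (s u : V) (hsu : u ≠ s)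
    (d : V → ι × Bool) (hd : ∀ v, loc (P (d v).1) (d v).2 = some v)
    (hnc : ∀ i, ¬ Cov (P i) s u) :
    ∃ P' : ι → List V, (∀ i, P' i ≠ []) ∧ (∀ i, (P' i).Nodup) ∧
      (∀ i j a b, Cov (P' i) a b → Cov (P' j) a b → i = j) ∧
      (∀ a b, (∃ i, Cov (P' i) a b) ↔ (∃ i, Cov (P i) a b) ∨ (a = s ∧ b = u) ∨ (a = u ∧ b = s)) ∧
      ∃ τ : Equiv.Perm (ι × Bool), ∀ e, (τ e = d u → loc (P' e.1) e.2 = some s) ∧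
        (τ e ≠ d u → loc (P' e.1) e.2 = loc (P (τ e).1) (τ e).2) := by
  classical
  choose nx h1 h2 h3 h4 using fun i => PL (P i) (hnd i) (hne i) s
  set X := Reach nx d (fun e => e = d u) with hX
  have dinj : ∀ v w, d v = d w → v = w := by
    intro v w h
    have := hd v
    rw [h, hd w] at this
    exact (Option.some.inj this).symm
  have nxu : ∀ e : ι × Bool, nx e.1 e.2 ≠ some u := fun e h => hnc _ (h1 _ _ _ h)
  have Xu : X (d u) := Reach.base _ rfl
  have Xst : ∀ (e : ι × Bool) w, X e → nx e.1 e.2 = some w → X (d w) := fun e w => Reach.step e w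
  have Xinv : ∀ e, X e → ∃ w, e = d w ∧ (w = u ∨ ∃ e' : ι × Bool, X e' ∧ nx e'.1 e'.2 = some w) := by
    intro e he
    cases he with
    | base _ h => exact ⟨u, h, Or.inl rfl⟩
    | step e' w h h' => exact ⟨w, rfl, Or.inr ⟨e', h, h'⟩⟩
  have nxinj : ∀ (e e' : ι × Bool) w, nx e.1 e.2 = some w → nx e'.1 e'.2 = some w → e = e' := by
    rintro ⟨i, b⟩ ⟨j, b'⟩ w h h'
    have : i = j := hU _ _ _ _ (h1 _ _ _ h) (h1 _ _ _ h')
    subst this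
    exact Prod.ext rfl (h2 _ _ _ _ h h')
  let τ : ι × Bool → ι × Bool := fun e => if X e then d ((nx e.1 e.2).getD u) else e
  have τX : ∀ e, X e → τ e = d ((nx e.1 e.2).getD u) := fun e h => if_pos h
  have τn : ∀ e, ¬ X e → τ e = e := fun e h => if_neg h
  have hterm : ∃ e : ι × Bool, X e ∧ nx e.1 e.2 = none := by
    by_contra hcon
    push Not at hcon
    have hτX : ∀ e, X e → ∃ w, nx e.1 e.2 = some w ∧ τ e = d w := by
      intro e he
      obtain ⟨w, hw⟩ := Option.ne_none_iff_exists'.1 (hcon e he)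
      exact ⟨w, hw, by rw [τX e he, hw]; rfl⟩
    have inj : Function.Injective τ := by
      intro e e' h
      by_cases he : X e <;> by_cases he' : X e'
      · obtain ⟨w, hw, hw'⟩ := hτX e he
        obtain ⟨v, hv, hv'⟩ := hτX e' he'
        have : w = v := dinj _ _ (by rw [← hw', ← hv', h])
        subst this
        exact nxinj _ _ _ hw hv
      · obtain ⟨w, hw, hw'⟩ := hτX e he
        rw [τn e' he', hw'] at h
        exact absurd (h ▸ Xst _ _ he hw) he'
      · obtain ⟨w, hw, hw'⟩ := hτX e' he'
        rw [τn e he, hw'] at h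
        exact absurd (h ▸ Xst _ _ he' hw) he
      · rwa [τn e he, τn e' he'] at h
    obtain ⟨e, he⟩ := (Finite.injective_iff_surjective.1 inj) (d u)
    by_cases hXe : X e
    · obtain ⟨w, hw, hw'⟩ := hτX e hXe
      rw [hw'] at he
      exact nxu e (dinj _ _ he ▸ hw)
    · rw [τn e hXe] at he
      exact hXe (he ▸ Xu)
  have surj : Function.Surjective τ := by
    intro e
    by_cases he : X e
    · obtain ⟨w, rfl, rfl | ⟨e', hX', hn⟩⟩ := Xinv e he
      · obtain ⟨t, ht, htn⟩ := hterm
        exact ⟨t, by rw [τX t ht, htn]; rfl⟩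
      · exact ⟨e', by rw [τX e' hX', hn]; rfl⟩
    · exact ⟨e, τn e he⟩
  have bij : Function.Bijective τ := ⟨Finite.injective_iff_surjective.2 surj, surj⟩
  have hxs : ∀ i b, X (i, b) → loc (P i) b ≠ some s := by
    intro i b hb
    obtain ⟨w, hw, h⟩ := Xinv _ hb
    have hl := hd w
    rw [← hw] at hl
    simp only at hl
    rw [hl]
    rcases h with rfl | ⟨e', _, hn⟩
    · simpa using hsu
    · have := (h1 _ _ _ hn).ne (hnd _)
      simpa using this.symm
  choose P' g1 g2 g3 _ using fun i => h4 i (fun b => X (i, b)) (hxs i)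
  have hopen : ∀ i, ¬ (X (i, false) ∧ X (i, true) ∧ s ∉ P i) := by
    rintro i ⟨a, b, c⟩
    have hN : ∀ b, nx i b = none := by
      intro b
      by_contra h
      obtain ⟨w, hw⟩ := Option.ne_none_iff_exists'.1 h
      exact c (h1 _ _ _ hw).mem.1
    have : τ (i, false) = τ (i, true) := by rw [τX _ a, τX _ b]; simp [hN]
    simpa using bij.1 this
  have key : ∀ i w, Cov (P' i) s w → w = u ∨ ∃ j, Cov (P j) s w := by
    intro i w h
    obtain ⟨b, ⟨hx, hl⟩ | ⟨hx, hn⟩⟩ := (g2 i w).1 h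
    · obtain ⟨v, hv, hh⟩ := Xinv _ hx
      have := hd v
      rw [← hv] at this
      simp only [hl] at this
      obtain rfl := Option.some.inj this
      rcases hh with h | ⟨e', _, hn⟩
      · exact Or.inl h
      · exact Or.inr ⟨_, h1 _ _ _ hn⟩
    · exact Or.inr ⟨_, h1 _ _ _ hn⟩
  have key2 : ∀ w, (w = u ∨ ∃ j, Cov (P j) s w) → ∃ i, Cov (P' i) s w := by
    rintro w (rfl | ⟨j, hj⟩)
    · exact ⟨(d w).1, (g2 _ _).2 ⟨(d w).2, Or.inl ⟨Xu, hd w⟩⟩⟩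
    · obtain ⟨b, hb⟩ := h3 _ _ hj
      by_cases hx : X (j, b)
      · exact ⟨(d w).1, (g2 _ _).2 ⟨(d w).2, Or.inl ⟨Xst _ _ hx hb, hd w⟩⟩⟩
      · exact ⟨j, (g2 _ _).2 ⟨b, Or.inr ⟨hx, hb⟩⟩⟩
  have key3 : ∀ i j w, Cov (P' i) s w → Cov (P' j) s w → i = j := by
    have aux : ∀ e : ι × Bool, X e → ∀ w, loc (P e.1) e.2 = some w →
        e = d w ∧ (w = u ∨ ∃ e' : ι × Bool, X e' ∧ nx e'.1 e'.2 = some w) := by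
      intro e he w hw
      obtain ⟨v, hv, hh⟩ := Xinv _ he
      have := hd v
      rw [← hv, hw] at this
      obtain rfl := Option.some.inj this
      exact ⟨hv, hh⟩
    have mix : ∀ e e' : ι × Bool, X e → ∀ w, loc (P e.1) e.2 = some w → ¬ X e' →
        nx e'.1 e'.2 = some w → False := by
      intro e e' he w hw he' hn
      rcases (aux e he w hw).2 with rfl | ⟨e'', hX'', hn''⟩
      · exact nxu _ hn
      · exact he' (nxinj _ _ _ hn'' hn ▸ hX'')
    intro i j w hi hj
    obtain ⟨b, ⟨hx, hl⟩ | ⟨hx, hn⟩⟩ := (g2 i w).1 hi <;>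
    obtain ⟨b', ⟨hx', hl'⟩ | ⟨hx', hn'⟩⟩ := (g2 j w).1 hj
    · have e1 := (aux (i, b) hx w hl).1
      have e2 := (aux (j, b') hx' w hl').1
      exact (Prod.ext_iff.1 (e1.trans e2.symm)).1
    · exact (mix (i, b) (j, b') hx w hl hx' hn').elim
    · exact (mix (j, b') (i, b) hx' w hl' hx hn).elim
    · exact (Prod.ext_iff.1 (nxinj (i, b) (j, b') w hn hn')).1
  refine ⟨P', fun i => (g3 i (hopen i)).1, fun i => (g3 i (hopen i)).2.1, ?_, ?_,
    Equiv.ofBijective τ bij, ?_⟩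
  · intro i j a b hi hj
    by_cases ha : a = s
    · subst ha; exact key3 i j b hi hj
    · by_cases hb : b = s
      · subst hb; exact key3 i j a hi.symm hj.symm
      · exact hU i j a b ((g1 i a b ha hb).1 hi) ((g1 j a b ha hb).1 hj)
  · intro a b
    by_cases ha : a = s
    · subst ha
      constructor
      · rintro ⟨i, hi⟩
        rcases key i b hi with h | h <;> tauto
      · rintro (h | ⟨_, h⟩ | ⟨h, _⟩)
        · exact key2 b (Or.inr h)
        · exact key2 b (Or.inl h)
        · exact absurd h.symm hsu
    · by_cases hb : b = s
      · subst hb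
        constructor
        · rintro ⟨i, hi⟩
          rcases key i a hi.symm with h | ⟨j, h⟩
          · tauto
          · exact Or.inl ⟨j, h.symm⟩
        · rintro (⟨j, h⟩ | ⟨_, h⟩ | ⟨h, _⟩)
          · obtain ⟨i, hi⟩ := key2 a (Or.inr ⟨j, h.symm⟩)
            exact ⟨i, hi.symm⟩
          · tauto
          · obtain ⟨i, hi⟩ := key2 a (Or.inl h)
            exact ⟨i, hi.symm⟩
      · simp [g1 _ a b ha hb, ha, hb]
  · rintro ⟨i, b⟩
    have h0 := (g3 i (hopen i)).2.2 b
    simp only [Equiv.ofBijective_apply]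
    by_cases hx : X (i, b)
    · have h0 := h0.1 hx
      have ht := τX _ hx
      cases hn : nx i b with
      | none =>
        simp [hn] at ht h0
        simp [ht, h0]
      | some w =>
        simp [hn] at ht h0
        rw [ht, h0, hd w]
        refine ⟨fun h => ?_, fun _ => rfl⟩
        exact absurd (dinj _ _ h ▸ hn) (nxu (i, b))
    · have ht := τn _ hx
      rw [ht, h0.2 hx]
      refine ⟨fun h => absurd (h ▸ Xu) hx, fun _ => rfl⟩

end Pyb

namespace Pyb
variable {V : Type*}

/-- number of list ends at `v` -/
noncomputable def endCount [Fintype V] (P : V → List V) (v : V) : ℕ :=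
  Set.ncard {e : V × Bool | loc (P e.1) e.2 = some v}

/-- `P` is a decomposition of `H` into paths. -/
structure Good (P : V → List V) (H : SimpleGraph V) : Prop where
  ne : ∀ i, P i ≠ []
  nd : ∀ i, (P i).Nodup
  uniq : ∀ i j a b, Cov (P i) a b → Cov (P j) a b → i = j
  cov : ∀ a b, (∃ i, Cov (P i) a b) ↔ H.Adj a b

theorem move [Fintype V] (P : V → List V) (H' H : SimpleGraph V) (hP : Good P H')
    (hA : ∀ v, 1 ≤ endCount P v) (s u : V) (hsu : u ≠ s) (hnc : ¬ H'.Adj s u)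
    (hH : ∀ a b, H.Adj a b ↔ H'.Adj a b ∨ (a = s ∧ b = u) ∨ (a = u ∧ b = s)) :
    ∃ P' : V → List V, Good P' H ∧ endCount P' s = endCount P s + 1 ∧
      endCount P' u + 1 = endCount P u ∧ ∀ v, v ≠ s → v ≠ u → endCount P' v = endCount P v := by
  classical
  have hd : ∀ v, ∃ e : V × Bool, loc (P e.1) e.2 = some v := by
    intro v
    have h := hA v
    have : ({e : V × Bool | loc (P e.1) e.2 = some v}).Nonempty := by
      rw [← Set.ncard_pos]; exact h
    exact this
  choose d hd using hd
  obtain ⟨P', n1, n2, n3, n4, τ, hτ⟩ := SM P hP.ne hP.nd hP.uniq s u hsu d hd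
    (fun i h => hnc ((hP.cov _ _).1 ⟨i, h⟩))
  have hcount : ∀ v, endCount P' v =
      Set.ncard {e : V × Bool | (e = d u → s = v) ∧ (e ≠ d u → loc (P e.1) e.2 = some v)} := by
    intro v
    unfold endCount
    rw [← Set.ncard_image_of_injective _ τ.injective]
    congr 1
    ext e
    obtain ⟨e, rfl⟩ := τ.surjective e
    simp only [Set.mem_image, Set.mem_setOf_eq]
    have : (∃ x : V × Bool, loc (P' x.1) x.2 = some v ∧ τ x = τ e) ↔
        loc (P' e.1) e.2 = some v := by
      constructor
      · rintro ⟨x, hx, h⟩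
        rwa [τ.injective h] at hx
      · intro h; exact ⟨e, h, rfl⟩
    rw [this]
    by_cases he : τ e = d u
    · rw [(hτ e).1 he]; simp [he]
    · rw [(hτ e).2 he]; simp [he]
  refine ⟨P', ⟨n1, n2, n3, fun a b => ?_⟩, ?_, ?_, ?_⟩
  · rw [n4, hP.cov, hH]
  · rw [hcount]
    have : {e : V × Bool | (e = d u → s = s) ∧ (e ≠ d u → loc (P e.1) e.2 = some s)} =
        insert (d u) {e : V × Bool | loc (P e.1) e.2 = some s} := by
      ext e
      by_cases he : e = d u <;> simp [he]
    rw [this, Set.ncard_insert_of_notMem, endCount]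
    simp [hd, hsu]
  · rw [hcount]
    have : {e : V × Bool | (e = d u → s = u) ∧ (e ≠ d u → loc (P e.1) e.2 = some u)} =
        {e : V × Bool | loc (P e.1) e.2 = some u} \ {d u} := by
      ext e
      by_cases he : e = d u <;> simp [he, hsu.symm]
    rw [this, Set.ncard_diff_singleton_add_one, endCount]
    simp [hd]
  · intro v hv hv'
    rw [hcount, endCount]
    congr 1
    ext e
    by_cases he : e = d u
    · simp [he, hd, hv.symm, hv'.symm]
    · simp [he]

/-- degree -/
noncomputable def dg (H : SimpleGraph V) (v : V) : ℕ := (H.neighborSet v).ncard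

theorem part1 [Fintype V] (m : ℕ) : ∀ H : SimpleGraph V, H.edgeSet.ncard = m →
    (∃ P, Good P H ∧ ∀ v, 1 ≤ endCount P v ∧ (Even (dg H v) → 2 ≤ endCount P v)) ∧
    (∀ u, ¬ Even (dg H u) →
      ∃ P, Good P H ∧ (∀ v, 1 ≤ endCount P v ∧ (Even (dg H v) → 2 ≤ endCount P v)) ∧
        3 ≤ endCount P u) := by
  classical
  induction m using Nat.strong_induction_on with
  | _ m ih =>
  intro H hm
  have red : ∀ u z, H.Adj u z → ∃ H' : SimpleGraph V, H'.edgeSet.ncard < m ∧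
      ¬ H'.Adj u z ∧ (∀ a b, H.Adj a b ↔ H'.Adj a b ∨ (a = u ∧ b = z) ∨ (a = z ∧ b = u)) ∧
      dg H u = dg H' u + 1 ∧ dg H z = dg H' z + 1 ∧ ∀ v, v ≠ u → v ≠ z → dg H v = dg H' v := by
    intro u z huz
    have hne := huz.ne
    refine ⟨H.deleteEdges {s(u, z)}, ?_, by simp, ?_, ?_, ?_, ?_⟩
    · rw [← hm, SimpleGraph.edgeSet_deleteEdges]
      exact Set.ncard_lt_ncard (Set.diff_singleton_ssubset.2 huz) (Set.toFinite _)
    · intro a b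
      simp only [SimpleGraph.deleteEdges_adj, Set.mem_singleton_iff, Sym2.eq_iff]
      constructor
      · intro h; by_cases h' : (a = u ∧ b = z) ∨ (a = z ∧ b = u) <;> tauto
      · rintro (h | ⟨rfl, rfl⟩ | ⟨rfl, rfl⟩)
        · exact h.1
        · exact huz
        · exact huz.symm
    · unfold dg
      rw [← Set.ncard_insert_of_notMem (a := z)]
      · congr 1
        ext w
        simp only [SimpleGraph.mem_neighborSet, Set.mem_insert_iff, SimpleGraph.deleteEdges_adj,
          Set.mem_singleton_iff, Sym2.eq_iff]
        by_cases hw : w = z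
        · subst hw; simp [huz]
        · simp [hw, hne]
      · simp
    · unfold dg
      rw [← Set.ncard_insert_of_notMem (a := u)]
      · congr 1
        ext w
        simp only [SimpleGraph.mem_neighborSet, Set.mem_insert_iff, SimpleGraph.deleteEdges_adj,
          Set.mem_singleton_iff, Sym2.eq_iff]
        by_cases hw : w = u
        · subst hw; simp [huz.symm]
        · simp [hw, hne.symm]
      · simp
    · intro v h1 h2
      unfold dg
      congr 1
      ext w
      simp [h1, h2]
  have B : ∀ u, ¬ Even (dg H u) →
      ∃ P, Good P H ∧ (∀ v, 1 ≤ endCount P v ∧ (Even (dg H v) → 2 ≤ endCount P v)) ∧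
        3 ≤ endCount P u := by
    intro u hu
    have : ∃ z, H.Adj u z := by
      by_contra h
      push Not at h
      apply hu
      have : H.neighborSet u = ∅ := by ext w; simp [h]
      simp [dg, this]
    obtain ⟨z, hz⟩ := this
    obtain ⟨H', hlt, hn, hH, du, dz, dv⟩ := red u z hz
    have hue : Even (dg H' u) := by rw [du] at hu; grind
    by_cases hzo : Even (dg H z)
    · have hz' : ¬ Even (dg H' z) := by rw [dz] at hzo; grind
      obtain ⟨P, hP, hA, h3⟩ := (ih _ hlt H' rfl).2 z hz'
      obtain ⟨P', hP', a1, a2, a3⟩ := move P H' H hP (fun v => (hA v).1) u z hz.ne.symm hn hH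
      refine ⟨P', hP', ?_, by have := (hA u).2 hue; omega⟩
      intro v
      by_cases hvu : v = u
      · subst hvu; have := (hA v).2 hue; refine ⟨by omega, fun _ => by omega⟩
      by_cases hvz : v = z
      · subst hvz; refine ⟨by omega, fun _ => by omega⟩
      rw [a3 v hvu hvz, dv v hvu hvz]; exact hA v
    · have hz' : Even (dg H' z) := by rw [dz] at hzo; grind
      obtain ⟨P, hP, hA⟩ := (ih _ hlt H' rfl).1
      obtain ⟨P', hP', a1, a2, a3⟩ := move P H' H hP (fun v => (hA v).1) u z hz.ne.symm hn hH
      have hz2 := (hA z).2 hz'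
      have hu2 := (hA u).2 hue
      refine ⟨P', hP', ?_, by omega⟩
      intro v
      by_cases hvu : v = u
      · subst hvu; refine ⟨by omega, fun _ => by omega⟩
      by_cases hvz : v = z
      · subst hvz; refine ⟨by omega, fun h => absurd h hzo⟩
      rw [a3 v hvu hvz, dv v hvu hvz]; exact hA v
  refine ⟨?_, B⟩
  by_cases hodd : ∃ u, ¬ Even (dg H u)
  · obtain ⟨u, hu⟩ := hodd
    obtain ⟨P, h1, h2, _⟩ := B u hu
    exact ⟨P, h1, h2⟩
  push Not at hodd
  by_cases hedge : ∃ u y, H.Adj u y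
  · obtain ⟨u, y, hz⟩ := hedge
    obtain ⟨H', hlt, hn, hH, dy, du, dv⟩ := red y u hz.symm
    have hu' : ¬ Even (dg H' u) := by have := hodd u; rw [du] at this; grind
    obtain ⟨P, hP, hA, h3⟩ := (ih _ hlt H' rfl).2 u hu'
    obtain ⟨P', hP', a1, a2, a3⟩ := move P H' H hP (fun v => (hA v).1) y u hz.ne hn hH
    refine ⟨P', hP', ?_⟩
    intro v
    by_cases hvu : v = y
    · subst hvu; have := (hA v).1; refine ⟨by omega, fun _ => by omega⟩
    by_cases hvz : v = u
    · subst hvz; refine ⟨by omega, fun _ => by omega⟩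
    rw [a3 v hvu hvz, dv v hvu hvz]; exact hA v
  · push Not at hedge
    have hc : ∀ v : V, endCount (fun v : V => [v]) v = 2 := by
      intro v
      have : {e : V × Bool | loc ([e.1] : List V) e.2 = some v} = {(v, false), (v, true)} := by
        ext ⟨w, b⟩
        cases b <;> simp [loc]
      rw [endCount, this, Set.ncard_pair (by simp)]
    have nc : ∀ i a b : V, ¬ Cov [i] a b := by
      intro i a b; simp [cov_cons, not_cov_nil]
    refine ⟨fun v => [v], ⟨by simp, by simp, ?_, ?_⟩, ?_⟩
    · intro i j a b h; exact absurd h (nc _ _ _)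
    · intro a b; simp [nc, hedge]
    · intro v; rw [hc]; simp

end Pyb

namespace Pyb
variable {V : Type*}

/-- `s` is the neighbour of `v` of minimal rank, and has rank smaller than `v`. -/
def Par (G : SimpleGraph V) (τ : V → ℕ) (s v : V) : Prop :=
  G.Adj v s ∧ τ s < τ v ∧ ∀ t, G.Adj v t → τ s ≤ τ t

/-- the invariant of the second phase -/
structure Inv (G : SimpleGraph V) (τ : V → ℕ) (k : ℕ) (P : V → List V) (O : V → Prop) : Prop where
  op : ∀ i, O i → P i ≠ [] ∧ (P i).Nodup
  cl : ∀ i, ¬ O i → ∃ s l, P i = s :: (l ++ [s]) ∧ l ≠ [] ∧ (s :: l).Nodup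
  snd : ∀ i a b, Cov (P i) a b →
    G.Adj a b ∧ (Par G τ a b → k ≤ τ a) ∧ (Par G τ b a → k ≤ τ b)
  cov1 : ∀ a b, G.Adj a b → ¬ Par G τ a b → ¬ Par G τ b a → ∃ i, Cov (P i) a b
  cov2 : ∀ a b, Par G τ a b → k ≤ τ a → ∃ i, Cov (P i) a b
  ex : ∀ v, (∀ t, Par G τ t v → τ t < k) → ∃ e : V × Bool, O e.1 ∧ loc (P e.1) e.2 = some v
  no : ∀ t v, Par G τ t v → k ≤ τ t → ∀ e : V × Bool, O e.1 → loc (P e.1) e.2 ≠ some v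

theorem Inv.step (G : SimpleGraph V) (τ : V → ℕ) (hinj : Function.Injective τ) (k : ℕ)
    (P : V → List V) (O : V → Prop) (I : Inv G τ (k + 1) P O) :
    ∃ P' O', Inv G τ k P' O' := by
  classical
  by_cases hs : ∃ s, τ s = k
  swap
  · have hk : ∀ a, k ≤ τ a → k + 1 ≤ τ a := by
      intro a h
      rcases Nat.lt_or_ge k (τ a) with h' | h'
      · exact h'
      · exact absurd ⟨a, le_antisymm h' h⟩ hs
    refine ⟨P, O, I.op, I.cl, ?_, I.cov1, fun a b h h' => I.cov2 a b h (hk a h'), ?_,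
      fun t v h h' => I.no t v h (hk t h')⟩
    · intro i a b h
      obtain ⟨h1, h2, h3⟩ := I.snd i a b h
      exact ⟨h1, fun h => by have := h2 h; omega, fun h => by have := h3 h; omega⟩
    · intro v h
      exact I.ex v (fun t ht => by have := h t ht; omega)
  obtain ⟨s, hs⟩ := hs
  have hk : ∀ a, k ≤ τ a → a = s ∨ k + 1 ≤ τ a := by
    intro a h
    rcases Nat.lt_or_ge k (τ a) with h' | h'
    · exact Or.inr h'
    · exact Or.inl (hinj (by omega))
  have hPL : ∀ i, ∃ nx : Bool → Option V, O i → 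
      (∀ b w, nx b = some w → Cov (P i) s w) ∧
      (∀ w, Cov (P i) s w → ∃ b, nx b = some w) ∧
      ∀ x : Bool → Prop, (∀ b, x b → loc (P i) b ≠ some s) → ∃ l' : List V,
      (∀ a b, a ≠ s → b ≠ s → (Cov l' a b ↔ Cov (P i) a b)) ∧
      (∀ w, Cov l' s w ↔ ∃ b, (x b ∧ loc (P i) b = some w) ∨ (¬ x b ∧ nx b = some w)) ∧
      (¬ (x false ∧ x true ∧ s ∉ P i) → l' ≠ [] ∧ l'.Nodup ∧
        ∀ b, (x b → loc l' b = some ((nx b).getD s)) ∧ (¬ x b → loc l' b = loc (P i) b)) ∧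
      (x false → x true → s ∉ P i → l' = s :: (P i ++ [s])) := by
    intro i
    by_cases h : O i
    · obtain ⟨nx, h1, _, h3, h4⟩ := PL (P i) (I.op i h).2 (I.op i h).1 s
      exact ⟨nx, fun _ => ⟨h1, h3, h4⟩⟩
    · exact ⟨fun _ => none, fun h' => absurd h' h⟩
  choose nx hnx using hPL
  have hdd : ∀ v, ∃ e : V × Bool, (∀ t, Par G τ t v → τ t < k + 1) →
      O e.1 ∧ loc (P e.1) e.2 = some v := by
    intro v
    by_cases h : ∀ t, Par G τ t v → τ t < k + 1
    · obtain ⟨e, he⟩ := I.ex v h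
      exact ⟨e, fun _ => he⟩
    · exact ⟨(s, false), fun h' => absurd h' h⟩
  choose d hd using hdd
  -- a neighbour of `s` along an open item
  have hnb : ∀ i w, Cov (P i) s w → G.Adj s w ∧ ¬ Par G τ s w ∧ ∀ t, Par G τ t w → τ t < k + 1 := by
    intro i w h
    obtain ⟨h1, h2, _⟩ := I.snd i s w h
    refine ⟨h1, fun h => by have := h2 h; omega, fun t ht => ?_⟩
    have := ht.2.2 s h1.symm
    omega
  have hUd : ∀ w, Par G τ s w → ∀ t, Par G τ t w → τ t < k + 1 := by
    intro w hw t ht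
    have := ht.2.2 s hw.1
    omega
  set X := Reach nx d (fun e => O e.1 ∧ ∃ v, Par G τ s v ∧ loc (P e.1) e.2 = some v) with hX
  have XO : ∀ e, X e → O e.1 := by
    intro e he
    induction he with
    | base e h => exact h.1
    | step e w h hn ih => exact (hd w (hnb _ _ ((hnx _ ih).1 _ _ hn)).2.2).1
  have Xinv : ∀ e, X e → (∃ v, Par G τ s v ∧ loc (P e.1) e.2 = some v) ∨
      ∃ w, ∃ e' : V × Bool, X e' ∧ nx e'.1 e'.2 = some w ∧ Cov (P e'.1) s w ∧
        e = d w ∧ loc (P e.1) e.2 = some w := by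
    intro e he
    cases he with
    | base _ h => exact Or.inl h.2
    | step e' w h hn =>
      have hc := (hnx _ (XO _ h)).1 _ _ hn
      exact Or.inr ⟨w, e', h, hn, hc, rfl, (hd w (hnb _ _ hc).2.2).2⟩
  have Xst : ∀ (e : V × Bool) w, X e → nx e.1 e.2 = some w → X (d w) := fun e w => Reach.step e w
  have Xb : ∀ e : V × Bool, O e.1 → ∀ v, Par G τ s v → loc (P e.1) e.2 = some v → X e :=
    fun e h v h1 h2 => Reach.base e ⟨h, v, h1, h2⟩
  have hxs : ∀ i b, X (i, b) → loc (P i) b ≠ some s := by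
    intro i b hb hl
    rcases Xinv _ hb with ⟨v, hv, h⟩ | ⟨w, e', _, _, hc, _, h⟩
    · simp only [hl] at h
      obtain rfl := Option.some.inj h
      exact hv.1.ne rfl
    · simp only [hl] at h
      obtain rfl := Option.some.inj h
      exact (hnb _ _ hc).1.ne rfl
  have hP' : ∀ i, ∃ l' : List V, (¬ O i → l' = P i) ∧ (O i →
      (∀ a b, a ≠ s → b ≠ s → (Cov l' a b ↔ Cov (P i) a b)) ∧
      (∀ w, Cov l' s w ↔ ∃ b, (X (i, b) ∧ loc (P i) b = some w) ∨ (¬ X (i, b) ∧ nx i b = some w)) ∧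
      (¬ (X (i, false) ∧ X (i, true) ∧ s ∉ P i) → l' ≠ [] ∧ l'.Nodup ∧
        ∀ b, (X (i, b) → loc l' b = some ((nx i b).getD s)) ∧
          (¬ X (i, b) → loc l' b = loc (P i) b)) ∧
      (X (i, false) → X (i, true) → s ∉ P i → l' = s :: (P i ++ [s]))) := by
    intro i
    by_cases h : O i
    · obtain ⟨l', hl'⟩ := (hnx i h).2.2 (fun b => X (i, b)) (hxs i)
      exact ⟨l', fun h' => absurd h h', fun _ => hl'⟩
    · exact ⟨P i, fun _ => rfl, fun h' => absurd h' h⟩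
  choose P' hcl hop using hP'
  have gc : ∀ i a b, a ≠ s → b ≠ s → (Cov (P' i) a b ↔ Cov (P i) a b) := by
    intro i a b ha hb
    by_cases h : O i
    · exact (hop i h).1 a b ha hb
    · rw [hcl i h]
  have cs : ∀ (e : V × Bool) w, X e → loc (P e.1) e.2 = some w → Cov (P' e.1) s w := by
    intro e w he hl
    exact ((hop _ (XO e he)).2.1 w).2 ⟨e.2, Or.inl ⟨he, hl⟩⟩
  have keep0 : ∀ i w, Cov (P i) s w → ∃ j, Cov (P' j) s w := by
    intro i w h
    by_cases hO : O i
    · obtain ⟨b, hb⟩ := (hnx i hO).2.1 w h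
      by_cases hx : X (i, b)
      · exact ⟨_, cs (d w) w (Xst _ _ hx hb) (hd w (hnb _ _ h).2.2).2⟩
      · exact ⟨i, ((hop i hO).2.1 w).2 ⟨b, Or.inr ⟨hx, hb⟩⟩⟩
    · exact ⟨i, by rwa [hcl i hO]⟩
  have keep : ∀ i a b, Cov (P i) a b → ∃ j, Cov (P' j) a b := by
    intro i a b h
    by_cases ha : a = s
    · subst ha; exact keep0 i b h
    by_cases hb : b = s
    · subst hb
      obtain ⟨j, hj⟩ := keep0 i a h.symm
      exact ⟨j, hj.symm⟩
    exact ⟨i, (gc i a b ha hb).2 h⟩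
  have old : ∀ i a b, Cov (P i) a b →
      G.Adj a b ∧ (Par G τ a b → k ≤ τ a) ∧ (Par G τ b a → k ≤ τ b) := by
    intro i a b h
    obtain ⟨h1, h2, h3⟩ := I.snd i a b h
    exact ⟨h1, fun h => by have := h2 h; omega, fun h => by have := h3 h; omega⟩
  have snd0 : ∀ i w, Cov (P' i) s w →
      G.Adj s w ∧ (Par G τ s w → k ≤ τ s) ∧ (Par G τ w s → k ≤ τ w) := by
    intro i w h
    by_cases hO : O i
    · obtain ⟨b, ⟨hx, hl⟩ | ⟨hx, hn⟩⟩ := ((hop i hO).2.1 w).1 h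
      · rcases Xinv _ hx with ⟨v, hv, h⟩ | ⟨v, e', _, _, hc, _, h⟩
        · simp only [hl] at h
          obtain rfl := Option.some.inj h
          refine ⟨hv.1.symm, fun _ => hs.ge, fun h => ?_⟩
          have h1 := h.2.1
          have h2 := hv.2.1
          omega
        · simp only [hl] at h
          obtain rfl := Option.some.inj h
          exact old _ _ _ hc
      · exact old _ _ _ ((hnx i hO).1 _ _ hn)
    · rw [hcl i hO] at h
      exact old _ _ _ h
  refine ⟨P', fun i => O i ∧ ¬ (X (i, false) ∧ X (i, true) ∧ s ∉ P i), ?_, ?_, ?_, ?_, ?_, ?_, ?_⟩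
  · rintro i ⟨h, h'⟩
    have := (hop i h).2.2.1 h'
    exact ⟨this.1, this.2.1⟩
  · intro i h
    by_cases hO : O i
    · have : X (i, false) ∧ X (i, true) ∧ s ∉ P i := by
        by_contra h'
        exact h ⟨hO, h'⟩
      refine ⟨s, P i, (hop i hO).2.2.2 this.1 this.2.1 this.2.2, (I.op i hO).1, ?_⟩
      exact List.nodup_cons.2 ⟨this.2.2, (I.op i hO).2⟩
    · rw [hcl i hO]; exact I.cl i hO
  · intro i a b h
    by_cases ha : a = s
    · subst ha; exact snd0 i b h
    by_cases hb : b = s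
    · subst hb
      obtain ⟨h1, h2, h3⟩ := snd0 i a h.symm
      exact ⟨h1.symm, h3, h2⟩
    exact old i a b ((gc i a b ha hb).1 h)
  · intro a b h1 h2 h3
    obtain ⟨i, hi⟩ := I.cov1 a b h1 h2 h3
    exact keep i a b hi
  · intro a b h h'
    rcases hk a h' with rfl | h'
    · have := hd b (hUd b h)
      exact ⟨_, cs (d b) b (Xb _ this.1 b h this.2) this.2⟩
    · obtain ⟨i, hi⟩ := I.cov2 a b h h'
      exact keep i a b hi
  · intro v hv
    have hdv := hd v (fun t ht => by have := hv t ht; omega)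
    by_cases hx : X (d v)
    · rcases Xinv _ hx with ⟨w, hw, h⟩ | ⟨w, e', hX', hn, hc, _, h⟩
      · rw [hdv.2] at h
        obtain rfl := Option.some.inj h
        have := hv s hw
        omega
      · rw [hdv.2] at h
        obtain rfl := Option.some.inj h
        have hO' : ¬ (X (e'.1, false) ∧ X (e'.1, true) ∧ s ∉ P e'.1) := fun h => h.2.2 hc.mem.1
        refine ⟨e', ⟨XO _ hX', hO'⟩, ?_⟩
        rw [(((hop _ (XO _ hX')).2.2.1 hO').2.2 e'.2).1 hX', hn]
        rfl
    · have hO' : ¬ (X ((d v).1, false) ∧ X ((d v).1, true) ∧ s ∉ P (d v).1) := by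
        rintro ⟨h1, h2, _⟩
        apply hx
        rcases hb : (d v).2 with _ | _
        · rw [← hb] at h1; exact h1
        · rw [← hb] at h2; exact h2
      refine ⟨d v, ⟨hdv.1, hO'⟩, ?_⟩
      rw [(((hop _ hdv.1).2.2.1 hO').2.2 (d v).2).2 hx, hdv.2]
  · rintro t v ht hkt ⟨i, b⟩ ⟨hO, hO'⟩ hl
    have hl' := ((hop i hO).2.2.1 hO').2.2 b
    by_cases hx : X (i, b)
    · have h1 := hl'.1 hx
      simp only at hl
      rw [hl] at h1
      cases hn : nx i b with
      | none =>
        rw [hn] at h1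
        obtain rfl : v = s := by simpa using h1
        have := ht.2.1
        omega
      | some w =>
        rw [hn] at h1
        obtain rfl : v = w := by simpa using h1
        obtain ⟨h2, h3, h4⟩ := hnb _ _ ((hnx i hO).1 _ _ hn)
        rcases hk t hkt with rfl | h5
        · exact h3 ht
        · have := h4 t ht
          omega
    · have h1 := hl'.2 hx
      simp only at hl
      rw [hl] at h1
      rcases hk t hkt with rfl | h5
      · exact hx (Xb (i, b) hO v ht h1.symm)
      · exact I.no t v ht h5 (i, b) hO h1.symm

theorem Inv.start [Fintype V] (G : SimpleGraph V) (τ : V → ℕ) (k : ℕ) (hk : ∀ v, τ v < k) :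
    ∃ P O, Inv G τ k P O := by
  let R : SimpleGraph V :=
    { Adj := fun a b => G.Adj a b ∧ ¬ Par G τ a b ∧ ¬ Par G τ b a
      symm := ⟨fun a b h => ⟨h.1.symm, h.2.2, h.2.1⟩⟩
      loopless := ⟨fun a h => h.1.ne rfl⟩ }
  obtain ⟨⟨P, hP, hA⟩, _⟩ := part1 _ R rfl
  refine ⟨P, fun _ => True, fun i _ => ⟨hP.ne i, hP.nd i⟩, fun i h => absurd trivial h, ?_, ?_, ?_,
    ?_, ?_⟩
  · intro i a b h
    obtain ⟨h1, h2, h3⟩ := (hP.cov a b).1 ⟨i, h⟩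
    exact ⟨h1, fun h => absurd h h2, fun h => absurd h h3⟩
  · intro a b h1 h2 h3
    exact (hP.cov a b).2 ⟨h1, h2, h3⟩
  · intro a b _ h
    have := hk a
    omega
  · intro v _
    have : ({e : V × Bool | loc (P e.1) e.2 = some v}).Nonempty := by
      rw [← Set.ncard_pos]; exact (hA v).1
    obtain ⟨e, he⟩ := this
    exact ⟨e, trivial, he⟩
  · intro t v _ h
    have := hk t
    omega

theorem Inv.final [Fintype V] (G : SimpleGraph V) (τ : V → ℕ) (hinj : Function.Injective τ) :
    ∃ P O, Inv G τ 0 P O := by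
  have h : ∃ k, ∀ v, τ v < k := by
    obtain ⟨m, hm⟩ := (Set.finite_range τ).bddAbove
    exact ⟨m + 1, fun v => Nat.lt_succ_of_le (hm ⟨v, rfl⟩)⟩
  obtain ⟨k, hk⟩ := h
  have hst := Inv.start G τ k hk
  clear hk
  induction k with
  | zero => exact hst
  | succ k ih =>
    obtain ⟨P, O, I⟩ := hst
    exact ih (Inv.step G τ hinj k P O I)

theorem exists_order (n : ℕ) (G : SimpleGraph (Fin n)) :
    ∃ τ : Fin n → ℕ, Function.Injective τ ∧ ∀ r r', (∀ t, G.Adj r t → τ r ≤ τ t) →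
      (∀ t, G.Adj r' t → τ r' ≤ τ t) → G.Reachable r r' → r = r' := by
  let rep : Fin n → Fin n := fun v => (G.connectedComponentMk v).out
  have hrep : ∀ v, G.Reachable v (rep v) := fun v =>
    SimpleGraph.ConnectedComponent.exact ((G.connectedComponentMk v).out_eq).symm
  have hrr : ∀ v w, G.Reachable v w → rep v = rep w := by
    intro v w h
    simp only [rep]
    rw [SimpleGraph.ConnectedComponent.sound h]
  have loc_min : ∀ v, (∀ t, G.Adj v t → G.dist v (rep v) * n + v.val ≤ G.dist t (rep t) * n + t.val) →
      v = rep v := by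
    intro v hv
    obtain ⟨p, hp⟩ := (hrep v).exists_walk_length_eq_dist
    generalize hw : rep v = w at p hp
    cases p with
    | nil => rfl
    | @cons _ t _ h q =>
      exfalso
      have h1 := hv t h
      have h2 : G.dist t w ≤ q.length := SimpleGraph.dist_le q
      rw [hw, ← hrr v t h.reachable, hw, ← hp, SimpleGraph.Walk.length_cons] at h1
      have h3 := t.isLt
      have h4 : G.dist t w * n ≤ q.length * n := Nat.mul_le_mul_right _ h2
      rw [Nat.add_mul] at h1
      omega
  refine ⟨fun v => G.dist v (rep v) * n + v.val, ?_, ?_⟩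
  · intro v w h
    have h' := congrArg (· % n) h
    simp only [Nat.mul_add_mod_self_right, Nat.mod_eq_of_lt v.isLt, Nat.mod_eq_of_lt w.isLt] at h'
    exact Fin.ext h'
  · intro r r' h h' hr
    rw [loc_min r h, loc_min r' h', hrr r r' hr]

end Pyb

namespace Pyb
variable {V : Type*}

theorem mkWalk (G : SimpleGraph V) (l : List V) : ∀ a, (∀ x y, Cov (a :: l) x y → G.Adj x y) →
    ∃ (b : V) (w : G.Walk a b), w.support = a :: l ∧ (a :: l).getLast? = some b := by
  induction l with
  | nil => intro a _; exact ⟨a, SimpleGraph.Walk.nil, by simp, by simp⟩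
  | cons c l ih =>
    intro a h
    obtain ⟨b, w, h1, h2⟩ := ih c (fun x y hxy => h x y ((cov_cons _ _ _ _).2 (Or.inl hxy)))
    have hac : G.Adj a c := h a c ((cov_cons _ _ _ _).2 (Or.inr (Or.inl ⟨rfl, rfl⟩)))
    exact ⟨b, SimpleGraph.Walk.cons hac w, by simp [h1], by rw [List.getLast?_cons_cons, h2]⟩

theorem mem_edges_iff {G : SimpleGraph V} {u v : V} (p : G.Walk u v) (a b : V) :
    s(a, b) ∈ p.edges ↔ Cov p.support a b := by
  induction p with
  | nil => simp [cov_cons, not_cov_nil]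
  | @cons u v w h p ih =>
    rw [SimpleGraph.Walk.edges_cons, SimpleGraph.Walk.support_cons, cov_cons, List.mem_cons, ih]
    have : p.support.head? = some v := by
      cases p <;> simp
    rw [this, Sym2.eq_iff]
    simp only [Option.some.injEq]
    grind

theorem closed_walk (G : SimpleGraph V) (s : V) (l : List V) (hl : l ≠ []) (hn : (s :: l).Nodup)
    (h : ∀ x y, Cov (s :: (l ++ [s])) x y → G.Adj x y) :
    ∃ p : Σ (u : V) (v : V), G.Walk u v,
      ((∃ h : p.2.1 = p.1, (p.2.2.copy rfl h).IsCycle) ∨ p.2.2.length = 1) ∧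
      ∀ a b, s(a, b) ∈ p.2.2.edges ↔ Cov (s :: (l ++ [s])) a b := by
  cases l with
  | nil => exact absurd rfl hl
  | cons v l =>
  have hsv : G.Adj s v := h s v ((cov_cons _ _ _ _).2 (Or.inr (Or.inl ⟨rfl, by simp⟩)))
  rcases List.eq_nil_or_concat l with rfl | ⟨m, c, rfl⟩
  · refine ⟨⟨s, v, SimpleGraph.Walk.cons hsv SimpleGraph.Walk.nil⟩, Or.inr (by simp), ?_⟩
    intro a b
    rw [mem_edges_iff]
    simp [cov_cons, not_cov_nil]
    grind
  · obtain ⟨b, p, h1, h2⟩ := mkWalk G (m ++ [c] ++ [s]) v (fun x y hxy =>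
      h x y ((cov_cons _ _ _ _).2 (Or.inl (by simpa using hxy))))
    obtain rfl : s = b := by
      simpa [List.getLast?_cons, List.getLast?_append] using h2
    refine ⟨⟨s, s, SimpleGraph.Walk.cons hsv p⟩, Or.inl ⟨rfl, ?_⟩, ?_⟩
    · show (SimpleGraph.Walk.cons hsv p).IsCycle
      rw [SimpleGraph.Walk.cons_isCycle_iff, SimpleGraph.Walk.isPath_def, mem_edges_iff, h1]
      simp only [List.concat_eq_append] at hn
      constructor
      · simp [List.nodup_append] at hn ⊢
        grind
      · rw [← List.cons_append, cov_append]
        have h3 : ¬ Cov (v :: (m ++ [c])) s v := by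
          intro hc
          have := hc.mem.1
          exact (List.nodup_cons.1 hn).1 this
        simp [h3, List.getLast?_cons, cov_cons, not_cov_nil]
        simp at hn
        grind
    · intro a b
      rw [mem_edges_iff, SimpleGraph.Walk.support_cons, h1]
      simp

end Pyb

/-- Pyber: the edge set of every simple graph on n vertices can
be covered by at most n − 1 subgraphs, each of which is a cycle or a single
edge (a walk of length 1). -/
theorem stmt_12 (n : ℕ) (G : SimpleGraph (Fin n)) :
    ∃ L : List (Σ (u : Fin n) (v : Fin n), G.Walk u v),
      L.length ≤ n - 1 ∧
      (∀ p ∈ L, (∃ h : p.2.1 = p.1, (p.2.2.copy rfl h).IsCycle) ∨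
        p.2.2.length = 1) ∧
      (∀ e : Sym2 (Fin n), e ∈ G.edgeSet ↔ ∃ p ∈ L, e ∈ p.2.2.edges) := by
  classical
  rcases Nat.eq_zero_or_pos n with rfl | hn
  · refine ⟨[], by simp, by simp, ?_⟩
    intro e
    induction e with
    | _ a b => exact a.elim0
  haveI : Nonempty (Fin n) := ⟨⟨0, hn⟩⟩
  obtain ⟨τ, hinj, hmin⟩ := Pyb.exists_order n G
  obtain ⟨P, O, I⟩ := Pyb.Inv.final G τ hinj
  have hopen : ∀ i, O i → ∀ a b, ¬ Pyb.Cov (P i) a b := by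
    intro i hi a b hab
    have hmn : ∀ e v, Pyb.loc (P i) e = some v → ∀ t, G.Adj v t → τ v ≤ τ t := by
      intro e v hv t ht
      by_contra hlt
      have : ∃ m, G.Adj v m ∧ ∀ t, G.Adj v t → τ m ≤ τ t := by
        obtain ⟨m, hm, hm'⟩ := Set.exists_min_image (G.neighborSet v) τ (Set.toFinite _) ⟨t, ht⟩
        exact ⟨m, hm, hm'⟩
      obtain ⟨m, hm, hm'⟩ := this
      have := hm' t ht
      exact I.no m v ⟨hm, by omega, hm'⟩ (Nat.zero_le _) (i, e) hi hv
    obtain ⟨hne, hnd⟩ := I.op i hi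
    cases hP : P i with
    | nil => exact hne hP
    | cons c l =>
      rw [hP] at hmn hnd hab
      obtain ⟨d, w, h1, h2⟩ := Pyb.mkWalk G l c (fun x y h => (I.snd i x y (by rwa [hP])).1)
      obtain rfl := hmin c d (hmn false c (by simp [Pyb.loc])) (hmn true d (by simp [Pyb.loc, h2]))
        ⟨w⟩
      cases l with
      | nil => simp [Pyb.cov_cons, Pyb.not_cov_nil] at hab
      | cons x l =>
        rw [List.getLast?_cons_cons] at h2
        exact (List.nodup_cons.1 hnd).1 (List.mem_of_getLast? h2)
  have hw : ∀ i, ∃ p : Σ (u : Fin n) (v : Fin n), G.Walk u v, ¬ O i →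
      ((∃ h : p.2.1 = p.1, (p.2.2.copy rfl h).IsCycle) ∨ p.2.2.length = 1) ∧
      ∀ a b, s(a, b) ∈ p.2.2.edges ↔ Pyb.Cov (P i) a b := by
    intro i
    by_cases h : O i
    · exact ⟨⟨i, i, SimpleGraph.Walk.nil⟩, fun h' => absurd h h'⟩
    · obtain ⟨s, l, hP, hl, hnd⟩ := I.cl i h
      obtain ⟨p, hp⟩ := Pyb.closed_walk G s l hl hnd (fun x y hxy => (I.snd i x y (by rwa [hP])).1)
      exact ⟨p, fun _ => by rw [hP]; exact hp⟩
  choose f hf using hw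
  refine ⟨((Finset.univ.filter (fun i => ¬ O i)).toList).map f, ?_, ?_, ?_⟩
  · obtain ⟨r, hr⟩ := Finite.exists_min τ
    obtain ⟨e, he, _⟩ := I.ex r (fun t ht => by have h1 := ht.2.1; have h2 := hr t; omega)
    have : Finset.univ.filter (fun i => ¬ O i) ⊆ Finset.univ.erase e.1 := by
      intro i hi
      simp at hi ⊢
      rintro rfl
      exact hi he
    have := Finset.card_le_card this
    simpa using this
  · intro p hp
    simp only [List.mem_map, Finset.mem_toList, Finset.mem_filter, Finset.mem_univ, true_and] at hp
    obtain ⟨i, hi, rfl⟩ := hp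
    exact (hf i hi).1
  · intro e
    constructor
    · induction e with
      | _ a b =>
      intro he
      rw [SimpleGraph.mem_edgeSet] at he
      have : ∃ i, Pyb.Cov (P i) a b := by
        by_cases h1 : Pyb.Par G τ a b
        · exact I.cov2 a b h1 (Nat.zero_le _)
        by_cases h2 : Pyb.Par G τ b a
        · obtain ⟨i, hi⟩ := I.cov2 b a h2 (Nat.zero_le _)
          exact ⟨i, hi.symm⟩
        exact I.cov1 a b he h1 h2
      obtain ⟨i, hi⟩ := this
      have hO : ¬ O i := fun h => hopen i h a b hi
      exact ⟨f i, by simpa using ⟨i, hO, rfl⟩, ((hf i hO).2 a b).2 hi⟩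
    · rintro ⟨p, _, he⟩
      exact SimpleGraph.Walk.edges_subset_edgeSet _ he
end

section
/- Every simple graph on n vertices which contains no cycle of length 4 can be covered by at most ⌊(n−1)/2⌋ cycles together with at most n − 1 single edges. -/
section PybSection
open Classical

namespace Pyb
variable {V : Type}

def ed : List V → List (Sym2 V)
  | [] => []
  | [_] => []
  | a :: b :: t => s(a, b) :: ed (b :: t)

noncomputable def oe (e : Sym2 V) (p : V) : Option V → ℕ
  | none => 0
  | some w => if s(w, p) = e then 1 else 0

noncomputable def sv (v : V) (x : Option V) : ℕ := if x = some v then 1 else 0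

noncomputable def cle (e : Sym2 V) : List V → ℕ
  | [] => 0
  | a :: t => oe e a ((a :: t).getLast?)

noncomputable def ec (x : Bool × List V) (e : Sym2 V) : ℕ :=
  (ed x.2).count e + if x.1 = true then cle e x.2 else 0

def En (x : Bool × List V) (σ : Bool) : Option V :=
  if x.1 = true then none else if σ = true then x.2.getLast? else x.2.head?

noncomputable def sc (x : Bool × List V) (v : V) : ℕ := sv v (En x false) + sv v (En x true)

def Good_s13 (x : Bool × List V) : Prop := x.2.Nodup ∧ x.2 ≠ [] ∧ (x.1 = true → 3 ≤ x.2.length)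

lemma ed_cons (e : Sym2 V) (p : V) (l : List V) :
    (ed (p :: l)).count e = (ed l).count e + oe e p l.head? := by
  cases l with
  | nil => simp [ed, oe]
  | cons a t => simp [ed, oe, List.count_cons, Sym2.eq_swap]

lemma ed_app (e : Sym2 V) (p : V) (l1 l2 : List V) :
    (ed (l1 ++ p :: l2)).count e = (ed l1).count e + (ed l2).count e + oe e p l1.getLast?
      + oe e p l2.head? := by
  induction l1 with
  | nil => simp [ed_cons, ed, oe]
  | cons a t ih =>
    rw [List.cons_append, ed_cons, ih, ed_cons]
    cases t with
    | nil => simp [ed, oe, Sym2.eq_swap]; omega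
    | cons b t => simp [List.getLast?_cons_cons]; omega

lemma ed_rev (e : Sym2 V) (l : List V) : (ed l.reverse).count e = (ed l).count e := by
  induction l with
  | nil => rfl
  | cons a t ih =>
    rw [List.reverse_cons, ed_app, ed_cons, ih]; simp [ed, oe]

lemma mem_ed {l : List V} {e : Sym2 V} (h : e ∈ ed l) : ∀ v ∈ e, v ∈ l := by
  induction l with
  | nil => simp [ed] at h
  | cons a t ih =>
    cases t with
    | nil => simp [ed] at h
    | cons b t =>
      simp only [ed, List.mem_cons] at h
      rcases h with rfl | h
      · intro v hv; simp at hv; rcases hv with rfl | rfl <;> simp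
      · intro v hv; exact List.mem_cons_of_mem _ (ih h v hv)

/-- the two pieces around p (for open items through p) -/
lemma item_op (x : Bool × List V) (hx : Good_s13 x) (p : V) :
    ∃ W : Bool → Option V,
      (∀ w, sv w (W false) + sv w (W true) ≤ ec x s(w, p)) ∧
      ∀ b : Bool → Prop, (∀ σ, b σ → ∃ a, En x σ = some a ∧ a ≠ p) →
        (b false → b true → 2 ≤ x.2.length) →
        ∃ x' : Bool × List V, Good_s13 x' ∧ x.2.length ≤ x'.2.length ∧
          (∀ e, ec x' e + ((if b false then oe e p (W false) else 0)
              + if b true then oe e p (W true) else 0)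
            = ec x e + ((if b false then oe e p (En x false) else 0)
              + if b true then oe e p (En x true) else 0)) ∧
          (∀ v, v ≠ p → sc x' v + ((if b false then sv v (En x false) else 0)
              + if b true then sv v (En x true) else 0)
            = sc x v + ((if b false then sv v (W false) else 0)
              + if b true then sv v (W true) else 0)) ∧
          sc x p ≤ sc x' p := by
  obtain ⟨c, l⟩ := x
  obtain ⟨hnd, hne, hc⟩ := hx
  simp only at hnd hne hc
  cases c with
  | true =>
    refine ⟨fun _ => none, by simp [sv], ?_⟩
    intro b hb _
    have h0 : ¬ b false := fun h => by obtain ⟨a, ha, _⟩ := hb _ h; simp [En] at ha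
    have h1 : ¬ b true := fun h => by obtain ⟨a, ha, _⟩ := hb _ h; simp [En] at ha
    exact ⟨(true, l), ⟨hnd, hne, hc⟩, le_rfl, by simp [h0, h1], by simp [h0, h1], le_rfl⟩
  | false =>
    by_cases hp : p ∈ l
    · obtain ⟨l1, l2, rfl⟩ := List.append_of_mem hp
      refine ⟨fun σ => if σ = true then l2.head? else l1.getLast?, ?_, ?_⟩
      · intro w
        have key : ∀ o : Option V, sv w o ≤ oe s(w, p) p o := by
          intro o; cases o with
          | none => simp [sv]
          | some u => 
            simp only [sv, oe, Option.some.injEq]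
            split_ifs with h1 h2 <;> simp_all
        have k1 := key l1.getLast?
        have k2 := key l2.head?
        simp only [ec, ed_app]
        simp
        omega
      · intro b hb _
        have h0 : b false → l1 ≠ [] := by
          rintro h rfl
          obtain ⟨a, ha, hap⟩ := hb _ h
          simp [En] at ha; exact hap ha.symm
        have h1 : b true → l2 ≠ [] := by
          rintro h rfl
          obtain ⟨a, ha, hap⟩ := hb _ h
          simp [En] at ha; exact hap ha.symm
        refine ⟨(false, (if b false then l1.reverse else l1) ++ p ::
          (if b true then l2.reverse else l2)), ⟨?_, by simp, by simp⟩, ?_, ?_, ?_, ?_⟩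
        · refine (List.Perm.nodup_iff ?_).1 hnd
          simp only
          apply List.Perm.append
          · split_ifs
            · exact (List.reverse_perm _).symm
            · exact List.Perm.refl _
          · apply List.Perm.cons
            split_ifs
            · exact (List.reverse_perm _).symm
            · exact List.Perm.refl _
        · simp only [List.length_append, List.length_cons]
          split_ifs <;> simp
        · intro e
          have e0 : b false → En (false, l1 ++ p :: l2) false = l1.head? := by
            intro h; have := h0 h
            cases l1 with
            | nil => exact absurd rfl this
            | cons a t => simp [En]
          have e1 : b true → En (false, l1 ++ p :: l2) true = l2.getLast? := by
            intro h; have := h1 h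
            cases l2 with
            | nil => exact absurd rfl this
            | cons a t => simp [En, List.getLast?_append, List.getLast?_cons]
          simp only [ec, ed_app]
          by_cases c0 : b false <;> by_cases c1 : b true <;>
            simp [c0, c1, ed_rev, e0, e1] <;> omega
        · intro v hv
          have ev : ∀ m1 m2 : List V, sc (false, m1 ++ p :: m2) v
              = sv v m1.head? + sv v m2.getLast? := by
            intro m1 m2
            have hv' : p ≠ v := fun h => hv h.symm
            cases m1 <;> cases m2 using List.reverseRecOn <;>
              simp [sc, En, sv, hv', List.getLast?_append, List.getLast?_cons]
          have e0 : b false → En (false, l1 ++ p :: l2) false = l1.head? := by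
            intro h; have := h0 h
            cases l1 with
            | nil => exact absurd rfl this
            | cons a t => simp [En]
          have e1 : b true → En (false, l1 ++ p :: l2) true = l2.getLast? := by
            intro h; have := h1 h
            cases l2 with
            | nil => exact absurd rfl this
            | cons a t => simp [En, List.getLast?_append, List.getLast?_cons]
          rw [ev, ev]
          by_cases c0 : b false <;> by_cases c1 : b true <;>
            simp [c0, c1, e0, e1] <;> omega
        · have ev : ∀ m1 m2 : List V, p ∉ m1 → p ∉ m2 → sc (false, m1 ++ p :: m2) p
              = (if m1 = [] then 1 else 0) + (if m2 = [] then 1 else 0) := by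
            intro m1 m2 q1 q2
            cases m1 <;> cases m2 using List.reverseRecOn <;>
              simp [sc, En, sv, List.getLast?_append, List.getLast?_cons] <;> grind
          have hn := hnd
          rw [List.nodup_middle, List.nodup_cons] at hn
          simp only [List.mem_append, not_or] at hn
          rw [ev _ _ hn.1.1 hn.1.2, ev]
          · split_ifs <;> simp_all
          · split_ifs <;> simp [hn.1]
          · split_ifs <;> simp [hn.1]
    · refine ⟨fun _ => none, by simp [sv], ?_⟩
      intro b hb hlen
      simp only at hlen
      have hs : sc (false, l) p = 0 := by
        have a1 : l.head? ≠ some p := fun h => hp (List.mem_of_mem_head? h)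
        have a2 : l.getLast? ≠ some p := fun h => hp (List.mem_of_getLast? h)
        simp [sc, En, sv, a1, a2]
      rw [hs]
      by_cases c0 : b false <;> by_cases c1 : b true
      · have := hlen c0 c1
        refine ⟨(true, p :: l), ⟨by simp [hp, hnd], by simp, by simp; omega⟩, by simp, ?_, ?_, by simp⟩
        · intro e
          have : (p :: l).getLast? = l.getLast? := by
            cases l with
            | nil => exact absurd rfl hne
            | cons a t => simp [List.getLast?_cons_cons]
          simp [ec, ed_cons, cle, c0, c1, oe, En, this]; omega
        · intro v hv
          simp [c0, c1, sc, En, sv]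
      · refine ⟨(false, p :: l), ⟨by simp [hp, hnd], by simp, by simp⟩, by simp, ?_, ?_, by simp⟩
        · intro e
          simp [ec, ed_cons, c0, c1, oe, En]
        · intro v hv
          have : (p :: l).getLast? = l.getLast? := by
            cases l with
            | nil => exact absurd rfl hne
            | cons a t => simp [List.getLast?_cons_cons]
          have hv' : p ≠ v := fun h => hv h.symm
          simp [c0, c1, sc, En, sv, this, hv']; omega
      · refine ⟨(false, l ++ [p]), ⟨by simpa [List.nodup_append, hnd] using fun a ha (h : a = p) => hp (h ▸ ha), by simp, by simp⟩, by simp, ?_, ?_, by simp⟩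
        · intro e
          simp [ec, ed_app, c0, c1, oe, En, ed]
        · intro v hv
          have hv' : p ≠ v := fun h => hv h.symm
          have : (l ++ [p]).head? = l.head? := by
            cases l with
            | nil => exact absurd rfl hne
            | cons a t => simp
          simp [c0, c1, sc, En, sv, hv', this]
      · exact ⟨(false, l), ⟨hnd, hne, hc⟩, le_rfl, by simp [c0, c1], by simp [c0, c1], by simp⟩



noncomputable def NN {ι : Type} [Fintype ι] (X : ι → Bool × List V) (e : Sym2 V) : ℕ :=
  ∑ i, ec (X i) e

noncomputable def SS {ι : Type} [Fintype ι] (X : ι → Bool × List V) (v : V) : ℕ :=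
  ∑ i, sc (X i) v

lemma good_diag {ι : Type} [Fintype ι] (X : ι → Bool × List V) (hX : ∀ i, Good_s13 (X i)) (p : V) :
    NN X s(p, p) = 0 := by
  unfold NN
  refine Finset.sum_eq_zero fun i _ => ?_
  obtain ⟨h1, h2, h3⟩ := hX i
  have : ∀ l : List V, l.Nodup → s(p, p) ∉ ed l := by
    intro l
    induction l with
    | nil => simp [ed]
    | cons a t ih =>
      cases t with
      | nil => simp [ed]
      | cons b t =>
        intro hn
        simp only [ed, List.mem_cons, not_or]
        refine ⟨?_, ih hn.of_cons⟩
        intro h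
        have h' : p = a ∧ p = b := by
          have h2 : p = a ∧ p = b ∨ p = b ∧ p = a := by simpa using h
          exact h2.elim id And.symm
        rw [← h'.1, ← h'.2] at hn
        simp at hn
  rw [ec, List.count_eq_zero_of_not_mem (this _ h1)]
  split_ifs with hc
  · have h3 := h3 hc
    match hl : (X i).2 with
    | [] => rfl
    | [a] => simp [hl] at h3
    | a :: b :: t =>
      simp only [cle, List.getLast?_cons_cons]
      rw [hl] at h1
      cases hg : (b :: t).getLast? with
      | none => simp [oe]
      | some u =>
        simp only [oe]
        rw [zero_add, if_neg]
        intro hu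
        have : u = p ∧ a = p := by simpa using hu
        have hm := List.mem_of_getLast? hg
        rw [this.1, ← this.2] at hm
        exact (List.nodup_cons.1 h1).1 hm
  · rfl

lemma oe_eq_sv (w p : V) (o : Option V) : oe s(w, p) p o = sv w o := by
  cases o with
  | none => simp [sv, oe]
  | some u =>
    simp only [sv, oe, Option.some.injEq]
    by_cases h : u = w
    · simp [h]
    · have : s(u, p) ≠ s(w, p) := by
        intro h'; apply h
        have h2 : u = w ∨ u = p ∧ p = w := by simpa using h'
        rcases h2 with h2 | ⟨h2, h3⟩
        · exact h2
        · exact h2.trans h3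
      rw [if_neg this, if_neg h]

lemma oe_zero (e : Sym2 V) (p : V) (o : Option V) (h : p ∉ e) : oe e p o = 0 := by
  cases o with
  | none => rfl
  | some u =>
    simp only [oe]
    rw [if_neg]
    rintro rfl
    simp at h

lemma core {ι : Type} [Fintype ι] (X : ι → Bool × List V) (hX : ∀ i, Good_s13 (X i)) (p : V)
    (St : ι → Bool → Prop)
    (hSt : ∀ i σ, St i σ → ∃ a, En (X i) σ = some a ∧ a ≠ p ∧ NN X s(a, p) = 0)
    (hSt2 : ∀ i, St i false → St i true → 2 ≤ (X i).2.length)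
    (hN : ∀ w, w ≠ p → NN X s(w, p) ≤ 1) :
    ∃ X' : ι → Bool × List V, (∀ i, Good_s13 (X' i)) ∧
      (∀ i, (X i).2.length ≤ (X' i).2.length) ∧
      (∀ e, p ∉ e → NN X' e = NN X e) ∧
      (∀ a, (∃ i σ, St i σ ∧ En (X i) σ = some a) →
        NN X' s(a, p) = ∑ s : ι × Bool, (if St s.1 s.2 then sv a (En (X s.1) s.2) else 0) ∧
        SS X' a + ∑ s : ι × Bool, (if St s.1 s.2 then sv a (En (X s.1) s.2) else 0) = SS X a) ∧
      (∀ w, w ≠ p → (¬ ∃ i σ, St i σ ∧ En (X i) σ = some w) →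
        (0 < SS X w → NN X' s(w, p) = NN X s(w, p) ∧ SS X' w = SS X w) ∧
        (SS X w = 0 → NN X' s(w, p) + SS X' w = NN X s(w, p))) ∧
      SS X p ≤ SS X' p := by
  choose W hW hop using fun i => item_op (X i) (hX i) p
  -- chosen slots
  have hch : ∀ w, ∃ t : Option (ι × Bool), (∀ s, t = some s → En (X s.1) s.2 = some w) ∧
      (0 < SS X w → t ≠ none) := by
    intro w
    by_cases h : ∃ s : ι × Bool, En (X s.1) s.2 = some w
    · obtain ⟨s, hs⟩ := h
      refine ⟨some s, ?_, by simp⟩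
      rintro s' hs'; cases hs'; exact hs
    · refine ⟨none, by simp, fun h0 => absurd h0 ?_⟩
      simp only [not_exists, Prod.forall] at h
      simp [SS, sc, sv, h]
  choose ch hch1 hch2 using hch
  let nx : ι × Bool → ι × Bool → Prop := fun s t => ∃ w, W s.1 s.2 = some w ∧ ch w = some t
  let B : ι × Bool → Prop := fun s => ∃ s0, St s0.1 s0.2 ∧ Relation.ReflTransGen nx s0 s
  have hB1 : ∀ s, St s.1 s.2 → B s := fun s h => ⟨s, h, Relation.ReflTransGen.refl⟩
  have hB2 : ∀ s t, B s → nx s t → B t := fun s t ⟨s0, h0, h⟩ h2 => ⟨s0, h0, h.tail h2⟩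
  have hB3 : ∀ t, B t → St t.1 t.2 ∨ ∃ s, B s ∧ nx s t := by
    rintro t ⟨s0, h0, h⟩
    rcases Relation.ReflTransGen.cases_tail h with h | ⟨c, hc, hct⟩
    · left; subst h; exact h0
    · right; exact ⟨c, ⟨s0, h0, hc⟩, hct⟩
  clear_value B
  have hbool : ∀ g : ι × Bool → ℕ, ∑ s, g s = ∑ i, (g (i, false) + g (i, true)) := by
    intro g
    rw [Fintype.sum_prod_type]
    refine Finset.sum_congr rfl fun i _ => ?_
    simp [add_comm]
  have hWN : ∀ w, ∑ s : ι × Bool, sv w (W s.1 s.2) ≤ NN X s(w, p) := by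
    intro w
    rw [hbool]
    exact Finset.sum_le_sum fun i _ => hW i w
  have hSS : ∀ w, SS X w = ∑ s : ι × Bool, sv w (En (X s.1) s.2) := by
    intro w
    rw [hbool]; rfl
  have hWne : ∀ (s : ι × Bool) w, W s.1 s.2 = some w → 0 < NN X s(w, p) := by
    intro s w h
    refine lt_of_lt_of_le ?_ (hWN w)
    refine lt_of_lt_of_le ?_ (Finset.single_le_sum (f := fun s : ι × Bool => sv w (W s.1 s.2)) (fun _ _ => Nat.zero_le _) (Finset.mem_univ s))
    simp [sv, h]
  have hpp := good_diag X hX p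
  have hWp : ∀ s : ι × Bool, W s.1 s.2 ≠ some p := by
    intro s h
    have := hWne s p h
    omega
  have hEn : ∀ i σ, B (i, σ) → ∃ a, En (X i) σ = some a ∧ a ≠ p := by
    intro i σ h
    rcases hB3 _ h with h | ⟨s, _, w, hw, hc⟩
    · obtain ⟨a, ha, hap, _⟩ := hSt _ _ h
      exact ⟨a, ha, hap⟩
    · exact ⟨w, hch1 _ _ hc, fun h => hWp s (h ▸ hw)⟩
  -- end slots at start vertices
  have hA : ∀ a, (∃ i σ, St i σ ∧ En (X i) σ = some a) → NN X s(a, p) = 0 := by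
    rintro a ⟨i, σ, h, he⟩
    obtain ⟨a', ha', _, h0⟩ := hSt _ _ h
    rw [he] at ha'; cases ha'; exact h0
  have hBA : ∀ a, (∃ i σ, St i σ ∧ En (X i) σ = some a) →
      ∀ s : ι × Bool, En (X s.1) s.2 = some a → (B s ↔ St s.1 s.2) := by
    intro a ha s hs
    refine ⟨fun h => ?_, hB1 s⟩
    rcases hB3 _ h with h | ⟨s', _, w, hw, hc⟩
    · exact h
    · have := hch1 _ _ hc
      rw [hs] at this; cases this
      have := hWne _ _ hw
      rw [hA a ha] at this; omega
  have hBn : ∀ w, (¬ ∃ i σ, St i σ ∧ En (X i) σ = some w) → ∀ s : ι × Bool,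
      En (X s.1) s.2 = some w → B s → ch w = some s ∧ ∃ s', B s' ∧ W s'.1 s'.2 = some w := by
    intro w hw s hs hb
    rcases hB3 _ hb with h | ⟨s', hs', w', hw', hc⟩
    · exact absurd ⟨_, _, h, hs⟩ hw
    · have := hch1 _ _ hc
      rw [hs] at this; cases this
      exact ⟨hc, s', hs', hw'⟩
  have hlen : ∀ i, B (i, false) → B (i, true) → 2 ≤ (X i).2.length := by
    intro i h0 h1
    by_contra hl
    obtain ⟨a, ha, _⟩ := hEn _ _ h0
    have hEE : En (X i) true = some a := by
      obtain ⟨_, hne, _⟩ := hX i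
      match h : (X i).2 with
      | [] => exact absurd h hne
      | [x] => simp only [En, h] at ha ⊢; simpa using ha
      | x :: y :: t => rw [h] at hl; simp at hl
    by_cases hAa : ∃ i σ, St i σ ∧ En (X i) σ = some a
    · exact hl (hSt2 i ((hBA a hAa (i, false) ha).1 h0) ((hBA a hAa (i, true) hEE).1 h1))
    · have e1 := (hBn a hAa (i, false) ha h0).1
      have e2 := (hBn a hAa (i, true) hEE h1).1
      rw [e1] at e2; simp at e2
  choose X' hX' hXl hXe hXs hXp using fun i => hop i (fun σ => B (i, σ)) (hEn i) (hlen i)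
  have hNN : ∀ e, NN X' e + ∑ s : ι × Bool, (if B s then oe e p (W s.1 s.2) else 0)
      = NN X e + ∑ s : ι × Bool, (if B s then oe e p (En (X s.1) s.2) else 0) := by
    intro e
    rw [hbool, hbool, NN, NN, ← Finset.sum_add_distrib, ← Finset.sum_add_distrib]
    exact Finset.sum_congr rfl fun i _ => hXe i e
  have hSS' : ∀ v, v ≠ p → SS X' v + ∑ s : ι × Bool, (if B s then sv v (En (X s.1) s.2) else 0)
      = SS X v + ∑ s : ι × Bool, (if B s then sv v (W s.1 s.2) else 0) := by
    intro v hv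
    rw [hbool, hbool, SS, SS, ← Finset.sum_add_distrib, ← Finset.sum_add_distrib]
    exact Finset.sum_congr rfl fun i _ => hXs i v hv
  have hβ : ∀ w, ∑ s : ι × Bool, (if B s then sv w (W s.1 s.2) else 0) ≤ NN X s(w, p) := by
    intro w
    refine le_trans (Finset.sum_le_sum fun s _ => ?_) (hWN w)
    split_ifs <;> simp
  refine ⟨X', hX', hXl, ?_, ?_, ?_, ?_⟩
  · intro e he
    have := hNN e
    simpa [oe_zero _ _ _ he] using this
  · intro a ha
    have hap : a ≠ p := by
      obtain ⟨i, σ, h, he⟩ := ha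
      obtain ⟨a', ha', hap, h0⟩ := hSt _ _ h
      rw [he] at ha'; cases ha'; exact hap
    have h1 := hNN s(a, p)
    have h2 := hSS' a hap
    have h3 := hβ a
    simp only [oe_eq_sv] at h1
    have hα : ∑ s : ι × Bool, (if B s then sv a (En (X s.1) s.2) else 0)
        = ∑ s : ι × Bool, (if St s.1 s.2 then sv a (En (X s.1) s.2) else 0) := by
      refine Finset.sum_congr rfl fun s _ => ?_
      by_cases hs : En (X s.1) s.2 = some a
      · simp [hBA a ha s hs]
      · simp [sv, hs]
    rw [hA a ha] at h1 h3
    rw [hα] at h1 h2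
    omega
  · intro w hwp hw
    have h1 := hNN s(w, p)
    have h2 := hSS' w hwp
    have h3 := hβ w
    have h4 := hN w hwp
    simp only [oe_eq_sv] at h1
    constructor
    · intro hpos
      have hα : ∑ s : ι × Bool, (if B s then sv w (En (X s.1) s.2) else 0)
          = ∑ s : ι × Bool, (if B s then sv w (W s.1 s.2) else 0) := by
        obtain ⟨t, ht⟩ := Option.ne_none_iff_exists'.1 (hch2 w hpos)
        by_cases hex : ∃ s', B s' ∧ W s'.1 s'.2 = some w
        · obtain ⟨s', hs', hws'⟩ := hex
          have hBt : B t := hB2 s' t hs' ⟨w, hws', ht⟩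
          have l1 : 1 ≤ ∑ s : ι × Bool, (if B s then sv w (W s.1 s.2) else 0) := by
            refine le_trans ?_ (Finset.single_le_sum (f := fun s : ι × Bool => (if B s then sv w (W s.1 s.2) else 0)) (fun _ _ => Nat.zero_le _) (Finset.mem_univ s'))
            simp [sv, hws', hs']
          have l2 : ∑ s : ι × Bool, (if B s then sv w (En (X s.1) s.2) else 0) = 1 := by
            rw [Finset.sum_eq_single t]
            · simp [hBt, sv, hch1 _ _ ht]
            · intro s _ hst
              by_cases hb : B s
              · by_cases hs : En (X s.1) s.2 = some w
                · have := (hBn w hw s hs hb).1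
                  rw [ht] at this; cases this; exact absurd rfl hst
                · simp [sv, hs]
              · simp [hb]
            · simp
          omega
        · rw [Finset.sum_eq_zero, Finset.sum_eq_zero]
          · intro s _
            by_cases hb : B s
            · have : W s.1 s.2 ≠ some w := fun h => hex ⟨s, hb, h⟩
              simp [sv, this]
            · simp [hb]
          · intro s _
            by_cases hb : B s
            · have : En (X s.1) s.2 ≠ some w := fun h => hex (hBn w hw s h hb).2
              simp [sv, this]
            · simp [hb]
      omega
    · intro hz
      have hα : ∑ s : ι × Bool, (if B s then sv w (En (X s.1) s.2) else 0) = 0 := by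
        rw [hSS] at hz
        have := (Finset.sum_eq_zero_iff.1 hz)
        refine Finset.sum_eq_zero fun s hs => ?_
        simp [this s hs]
      omega
  · exact Finset.sum_le_sum fun i _ => hXp i

lemma sum_sv [Fintype V] (o : Option V) : ∑ v, sv v o = if o = none then 0 else 1 := by
  cases o with
  | none => simp [sv]
  | some u => simp [sv]

lemma sum_sc [Fintype V] (x : Bool × List V) (hx : Good_s13 x) :
    ∑ v, sc x v = if x.1 = true then 0 else 2 := by
  simp only [sc]
  rw [Finset.sum_add_distrib, sum_sv, sum_sv]
  have h2 := hx.2.1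
  by_cases h : x.1 = true
  · simp [En, h]
  · simp [En, h, h2]

lemma sum_SS [Fintype V] {ι : Type} [Fintype ι] (X : ι → Bool × List V) (hX : ∀ i, Good_s13 (X i)) :
    ∃ q, ∑ v, SS X v = 2 * q ∧ q ≤ Fintype.card ι := by
  refine ⟨∑ i, if (X i).1 = true then 0 else 1, ?_, ?_⟩
  · simp only [SS]
    rw [Finset.sum_comm, Finset.mul_sum]
    refine Finset.sum_congr rfl fun i _ => ?_
    rw [sum_sc _ (hX i)]
    split_ifs <;> rfl
  · rw [Fintype.card_eq_sum_ones]
    exact Finset.sum_le_sum fun i _ => by split_ifs <;> simp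

lemma exists_slot {ι : Type} [Fintype ι] (X : ι → Bool × List V) (w : V) (h0 : 0 < SS X w) :
    ∃ i σ, En (X i) σ = some w := by
  by_contra h
  push Not at h
  simp [SS, sc, sv, h] at h0

lemma deg_erase (F : Finset (Sym2 V)) (x p v : V) (hxp : x ≠ p) (h : s(x, p) ∈ F) :
    ((F.erase s(x, p)).filter (fun e => v ∈ e)).card + (if v = x ∨ v = p then 1 else 0)
      = (F.filter (fun e => v ∈ e)).card := by
  rw [Finset.filter_erase]
  by_cases hv : v = x ∨ v = p
  · have hm : s(x, p) ∈ F.filter (fun e => v ∈ e) := by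
      simp only [Finset.mem_filter]
      exact ⟨h, by simpa using hv⟩
    rw [if_pos hv, Finset.card_erase_add_one hm]
  · rw [if_neg hv, Finset.erase_eq_of_notMem]
    · rfl
    · simp only [Finset.mem_filter, not_and]
      intro _
      simpa using hv

lemma sum_shift [Fintype V] (τ τ' : V → ℕ) (x p : V) (hxp : x ≠ p) (h1 : τ' x = τ x + 1)
    (h2 : τ' p + 1 = τ p) (h3 : ∀ v, v ≠ x → v ≠ p → τ' v = τ v) : ∑ v, τ' v = ∑ v, τ v := by
  have hp : p ∈ Finset.univ.erase x := by simp [hxp.symm]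
  rw [← Finset.add_sum_erase _ τ (Finset.mem_univ x), ← Finset.add_sum_erase _ τ' (Finset.mem_univ x),
    ← Finset.add_sum_erase _ τ hp, ← Finset.add_sum_erase _ τ' hp]
  have : ∑ v ∈ (Finset.univ.erase x).erase p, τ' v = ∑ v ∈ (Finset.univ.erase x).erase p, τ v :=
    Finset.sum_congr rfl fun v hv => by
      simp only [Finset.mem_erase] at hv
      exact h3 v hv.2.1 hv.1
  omega

lemma lov [Fintype V] {K : Type} (κ : V → K) : ∀ (m : ℕ) (F : Finset (Sym2 V)) (τ : V → ℕ),
    F.card = m → (∀ a, s(a, a) ∉ F) → (∀ a b, s(a, b) ∈ F → κ a = κ b) →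
    (∀ v, ((F.filter (fun e => v ∈ e)).card + τ v) % 2 = 0) →
    (∀ u v a b, s(u, a) ∈ F → s(v, b) ∈ F → τ u = 0 → τ v = 0 → κ u = κ v → u = v) →
    ∃ (ι : Type) (_ : Fintype ι) (X : ι → Bool × List V), (∀ i, Good_s13 (X i)) ∧
      (∀ e, NN X e = if e ∈ F then 1 else 0) ∧ (∀ v, SS X v = τ v) ∧
      2 * Fintype.card ι = ∑ v, τ v := by
  intro m
  induction m with
  | zero =>
    intro F τ hF _ _ hpar _
    have hF0 : F = ∅ := Finset.card_eq_zero.1 hF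
    subst hF0
    have hpar' : ∀ v, τ v % 2 = 0 := by intro v; simpa using hpar v
    refine ⟨Σ v, Fin (τ v / 2), inferInstance, fun i => (false, [i.1]), ?_, ?_, ?_, ?_⟩
    · intro i; simp [Good_s13]
    · intro e; simp [NN, ec, ed]
    · intro v
      simp only [SS, sc, En, sv]
      rw [Fintype.sum_sigma]
      rw [Finset.sum_eq_single v]
      · simp; have := hpar' v; omega
      · intro u _ hu; simp [hu]
      · simp
    · rw [Fintype.card_sigma, Finset.mul_sum]
      refine Finset.sum_congr rfl fun v _ => ?_
      have := hpar' v
      simp; omega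
  | succ m ih =>
    intro F τ hF hdiag hκ hpar huniq
    have hpick : ∃ x p, s(x, p) ∈ F ∧ ∀ w b, s(w, b) ∈ F → τ w = 0 → κ w = κ x → w = x := by
      have hne : F.Nonempty := Finset.card_pos.1 (by omega)
      obtain ⟨e, he⟩ := hne
      induction e using Sym2.ind with
      | _ a b =>
        by_cases h : ∃ w c, s(w, c) ∈ F ∧ τ w = 0 ∧ κ w = κ a
        · obtain ⟨w, c, h1, h2, h3⟩ := h
          exact ⟨w, c, h1, fun w' b' h1' h2' h3' => huniq w' w b' c h1' h1 h2' h2 h3'⟩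
        · refine ⟨a, b, he, fun w c h1 h2 h3 => absurd ⟨w, c, h1, h2, h3⟩ h⟩
    obtain ⟨x, p, hxpF, hx⟩ := hpick
    have hxp : x ≠ p := by rintro rfl; exact hdiag _ hxpF
    have hκxp := hκ _ _ hxpF
    have hτp : 1 ≤ τ p := by
      by_contra h
      exact hxp (hx p x (by rw [Sym2.eq_swap]; exact hxpF) (by omega) hκxp.symm).symm
    let τ' : V → ℕ := fun v => if v = x then τ v + 1 else if v = p then τ v - 1 else τ v
    have hτ'x : τ' x = τ x + 1 := by simp [τ']
    have hτ'p : τ' p = τ p - 1 := by simp [τ', hxp.symm]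
    have hτ'o : ∀ v, v ≠ x → v ≠ p → τ' v = τ v := by intro v h1 h2; simp [τ', h1, h2]
    have hz : ∀ v b, v ≠ p → s(v, b) ∈ F → κ v = κ x → τ' v ≠ 0 := by
      intro v b hvp hvb hk h0
      have hvx : v ≠ x := by rintro rfl; omega
      rw [hτ'o v hvx hvp] at h0
      exact hvx (hx v b hvb h0 hk)
    obtain ⟨ι, hι, X, hG, hN, hS, hcard⟩ := ih (F.erase s(x, p)) τ'
      (by rw [Finset.card_erase_of_mem hxpF]; omega)
      (fun a h => hdiag a (Finset.mem_of_mem_erase h))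
      (fun a b h => hκ a b (Finset.mem_of_mem_erase h))
      (by
        intro v
        have h1 := hpar v
        have h2 := deg_erase F x p v hxp hxpF
        by_cases hvx : v = x
        · subst hvx; simp at h2; omega
        · by_cases hvp : v = p
          · subst hvp; simp at h2; omega
          · rw [hτ'o v hvx hvp]; simp [hvx, hvp] at h2; omega)
      (by
        intro u v a b hu hv hu0 hv0 hk
        have hu := Finset.mem_of_mem_erase hu
        have hv := Finset.mem_of_mem_erase hv
        by_cases hup : u = p
        · by_cases hvp : v = p
          · rw [hup, hvp]
          · exact absurd hv0 (hz v b hvp hv (by rw [← hk, hup, hκxp]))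
        · by_cases hvp : v = p
          · exact absurd hu0 (hz u a hup hu (by rw [hk, hvp, hκxp]))
          · have hux : u ≠ x := by rintro rfl; omega
            have hvx : v ≠ x := by rintro rfl; omega
            rw [hτ'o u hux hup] at hu0
            rw [hτ'o v hvx hvp] at hv0
            exact huniq u v a b hu hv hu0 hv0 hk)
    obtain ⟨i0, σ0, h0⟩ := exists_slot X x (by rw [hS]; omega)
    have hNx : NN X s(x, p) = 0 := by rw [hN]; simp
    obtain ⟨St, hStd⟩ : ∃ St : ι → Bool → Prop, ∀ i σ, St i σ ↔ (i = i0 ∧ σ = σ0) :=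
      ⟨fun i σ => i = i0 ∧ σ = σ0, fun _ _ => Iff.rfl⟩
    have hAiff : ∀ a, (∃ i σ, St i σ ∧ En (X i) σ = some a) ↔ a = x := by
      intro a
      constructor
      · rintro ⟨i, σ, hst, h⟩
        obtain ⟨rfl, rfl⟩ := (hStd i σ).1 hst
        rw [h0] at h; cases h; rfl
      · rintro rfl; exact ⟨i0, σ0, (hStd _ _).2 ⟨rfl, rfl⟩, h0⟩
    obtain ⟨X', hG', -, hNo, hA, hnA, hSp⟩ := core X hG p St
      (by intro i σ hst; obtain ⟨rfl, rfl⟩ := (hStd i σ).1 hst; exact ⟨x, h0, hxp, hNx⟩)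
      (by
        intro i h1 h2
        have h1 := ((hStd _ _).1 h1).2
        have h2 := ((hStd _ _).1 h2).2
        rw [← h1] at h2; cases h2)
      (by intro w _; rw [hN]; split_ifs <;> simp)
    have hcnt : ∑ s : ι × Bool, (if St s.1 s.2 then sv x (En (X s.1) s.2) else 0) = 1 := by
      rw [Finset.sum_eq_single (i0, σ0)]
      · simp [sv, h0, hStd]
      · rintro ⟨i, σ⟩ _ h
        rw [if_neg]
        intro hst
        obtain ⟨h1, h2⟩ := (hStd _ _).1 hst
        simp only at h1 h2
        subst h1 h2; exact h rfl
      · simp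
    obtain ⟨hAx1, hAx2⟩ := hA x ((hAiff x).2 rfl)
    rw [hcnt] at hAx1 hAx2
    have hw : ∀ w, w ≠ p → w ≠ x → NN X' s(w, p) = NN X s(w, p) ∧ SS X' w = SS X w := by
      intro w hwp hwx
      obtain ⟨h1, h2⟩ := hnA w hwp (by rw [hAiff]; exact hwx)
      by_cases hs : 0 < SS X w
      · exact h1 hs
      · have hs0 : SS X w = 0 := by omega
        have h3 := h2 hs0
        have : NN X s(w, p) = 0 := by
          rw [hN, if_neg]
          intro hm
          have hm := Finset.mem_of_mem_erase hm
          exact hz w p hwp hm (by rw [hκ _ _ hm, hκxp]) (by rw [← hS]; exact hs0)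
        omega
    have hSne : ∀ v, v ≠ p → SS X' v = τ v := by
      intro v hvp
      by_cases hvx : v = x
      · subst hvx; have := hS v; omega
      · rw [(hw v hvp hvx).2, hS, hτ'o v hvx hvp]
    refine ⟨ι, hι, X', hG', ?_, ?_, ?_⟩
    · intro e
      by_cases hpe : p ∈ e
      · obtain ⟨w, rfl⟩ := Sym2.mem_iff_exists.1 hpe
        rw [Sym2.eq_swap]
        by_cases hwx : w = x
        · subst hwx; rw [hAx1, if_pos hxpF]
        · by_cases hwp : w = p
          · subst hwp
            rw [if_neg (hdiag w)]
            have := good_diag X' hG' w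
            exact this
          · rw [(hw w hwp hwx).1, hN]
            have : s(w, p) ≠ s(x, p) := by
              intro h
              have : w = x ∨ w = p ∧ p = x := by simpa using h
              rcases this with h | h
              · exact hwx h
              · exact hwp h.1
            simp [Finset.mem_erase, this]
      · rw [hNo e hpe, hN]
        have : e ≠ s(x, p) := by rintro rfl; simp at hpe
        simp [Finset.mem_erase, this]
    · intro v
      by_cases hvp : v = p
      · subst hvp
        obtain ⟨q, hq1, hq2⟩ := sum_SS X' hG'
        have e1 : ∑ u, SS X' u = SS X' v + ∑ u ∈ Finset.univ.erase v, SS X' u :=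
          (Finset.add_sum_erase _ _ (Finset.mem_univ v)).symm
        have e2 : ∑ u, τ u = τ v + ∑ u ∈ Finset.univ.erase v, τ u :=
          (Finset.add_sum_erase _ _ (Finset.mem_univ v)).symm
        have e3 : ∑ u ∈ Finset.univ.erase v, SS X' u = ∑ u ∈ Finset.univ.erase v, τ u :=
          Finset.sum_congr rfl fun u hu => hSne u (Finset.ne_of_mem_erase hu)
        have e4 : ∑ u, τ' u = ∑ u, τ u := sum_shift τ τ' x v hxp hτ'x (by omega) hτ'o
        have := hS v
        omega
      · exact hSne v hvp
    · rw [hcard]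
      exact sum_shift τ τ' x p hxp hτ'x (by omega) hτ'o

lemma order [Fintype V] (H : SimpleGraph V) : ∃ (f : V → ℕ) (R : V → Prop),
    Function.Injective f ∧ (∀ v, ¬ R v → ∃ u, H.Adj v u ∧ f u < f v) ∧
    (∀ r u, R r → ¬ R u → f r < f u) ∧
    (∀ r r', R r → R r' → H.Reachable r r' → r = r') := by
  let n := Fintype.card V
  let φ : V ≃ Fin n := Fintype.equivFin V
  let rep : V → V := fun v => (H.connectedComponentMk v).out
  have hrep : ∀ v, H.Reachable v (rep v) := by
    intro v
    apply SimpleGraph.ConnectedComponent.exact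
    exact (Quot.out_eq (H.connectedComponentMk v)).symm
  have hrepeq : ∀ u v, H.Reachable u v → rep u = rep v := by
    intro u v h
    simp only [rep]
    rw [SimpleGraph.ConnectedComponent.sound h]
  let d : V → ℕ := fun v => H.dist v (rep v)
  have hlt : ∀ u v, d u < d v → d u * n + (φ u).val < d v * n + (φ v).val := by
    intro u v h
    have h1 := (φ u).isLt
    have h2 : (d u + 1) * n ≤ d v * n := Nat.mul_le_mul_right _ h
    rw [Nat.add_mul] at h2
    omega
  refine ⟨fun v => d v * n + (φ v).val, fun v => rep v = v, ?_, ?_, ?_, ?_⟩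
  · intro u v h
    simp only at h
    rcases lt_trichotomy (d u) (d v) with h1 | h1 | h1
    · have := hlt _ _ h1; omega
    · rw [h1] at h
      exact φ.injective (Fin.ext (by omega))
    · have := hlt _ _ h1; omega
  · intro v hv
    change ¬ rep v = v at hv
    obtain ⟨w, hw⟩ := (hrep v).exists_walk_length_eq_dist
    generalize hr : rep v = r at w hw hv
    cases w with
    | nil => exact absurd rfl hv
    | @cons _ u _ h w =>
      refine ⟨u, h, hlt _ _ ?_⟩
      have h1 : rep u = r := by rw [← hr]; exact hrepeq _ _ h.symm.reachable
      have h2 : d u ≤ w.length := by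
        simp only [d]; rw [h1]; exact SimpleGraph.dist_le w
      have h3 : d v = w.length + 1 := by
        simp only [d]; rw [hr, ← hw]; simp
      omega
  · intro r u hr hu
    apply hlt
    have h1 : d r = 0 := by simp only [d]; rw [hr]; simp
    have h2 : 0 < d u := (hrep u).pos_dist_of_ne (fun h => hu h.symm)
    omega
  · intro r r' hr hr' h
    rw [← hr, ← hr']; exact hrepeq _ _ h

lemma jlem [Fintype V] (f : V → ℕ) (hf : Function.Injective f) (R : V → Prop)
    (E0 : Finset (Sym2 V)) (par : V → V) (hp1 : ∀ v, ¬ R v → s(v, par v) ∈ E0)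
    (hp2 : ∀ v, ¬ R v → f (par v) < f v) :
    ∃ J ⊆ E0, (∀ v, ¬ R v → (((E0 \ J).filter (fun e => v ∈ e)).card) % 2 = 1) ∧
      J.card ≤ (Finset.univ.filter (fun v => ¬ R v)).card := by
  have key : ∀ k m, k + m = (∑ v, f v) + 1 →
      ∃ J ⊆ (Finset.univ.filter (fun v => ¬ R v ∧ m ≤ f v)).image (fun v => s(v, par v)),
      ∀ v, ¬ R v → m ≤ f v → (((E0 \ J).filter (fun e => v ∈ e)).card) % 2 = 1 := by
    intro k
    induction k with
    | zero =>
      intro m hm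
      refine ⟨∅, by simp, fun v _ hv => ?_⟩
      have : f v ≤ ∑ v, f v := Finset.single_le_sum (f := f) (fun _ _ => Nat.zero_le _) (Finset.mem_univ v)
      omega
    | succ k ih =>
      intro m hm
      obtain ⟨J, hJ, hodd⟩ := ih (m + 1) (by omega)
      have hJ' : J ⊆ (Finset.univ.filter (fun v => ¬ R v ∧ m ≤ f v)).image (fun v => s(v, par v)) := by
        refine hJ.trans (Finset.image_subset_image ?_)
        intro v; simp only [Finset.mem_filter]; rintro ⟨h1, h2, h3⟩; exact ⟨h1, h2, by omega⟩
      by_cases h : ∃ p, f p = m ∧ ¬ R p ∧ (((E0 \ J).filter (fun e => p ∈ e)).card) % 2 = 0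
      · obtain ⟨p, hpm, hpR, hpe⟩ := h
        have hlt := hp2 p hpR
        have hne : p ≠ par p := by intro h; rw [← h] at hlt; omega
        have hnJ : s(p, par p) ∉ J := by
          intro h
          obtain ⟨v, hv, he⟩ := Finset.mem_image.1 (hJ h)
          simp only [Finset.mem_filter] at hv
          have := hp2 v hv.2.1
          rw [Sym2.eq_iff] at he
          rcases he with ⟨h1, h2⟩ | ⟨h1, h2⟩
          · subst h1; omega
          · rw [h1] at hv; omega
        have hmem : s(p, par p) ∈ E0 \ J := Finset.mem_sdiff.2 ⟨hp1 p hpR, hnJ⟩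
        refine ⟨insert s(p, par p) J, ?_, ?_⟩
        · refine Finset.insert_subset ?_ hJ'
          exact Finset.mem_image.2 ⟨p, by simp [hpR, hpm], rfl⟩
        · intro v hvR hv
          have hd := deg_erase (E0 \ J) p (par p) v hne hmem
          have he : E0 \ insert s(p, par p) J = (E0 \ J).erase s(p, par p) := by
            rw [Finset.sdiff_insert]
          rw [he]
          by_cases hvp : v = p
          · subst hvp; simp at hd; omega
          · have h1 : f v ≠ m := fun h => hvp (hf (by rw [h, hpm]))
            have h2 : v ≠ par p := by rintro rfl; omega
            have := hodd v hvR (by omega)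
            simp only [hvp, h2, or_self, if_false] at hd
            omega
      · refine ⟨J, hJ', ?_⟩
        intro v hvR hv
        by_cases h1 : f v = m
        · by_contra h2
          exact h ⟨v, h1, hvR, by omega⟩
        · exact hodd v hvR (by omega)
  obtain ⟨J, hJ, hodd⟩ := key _ 0 rfl
  refine ⟨J, ?_, fun v hv => hodd v hv (by omega), ?_⟩
  · intro e he
    obtain ⟨v, hv, rfl⟩ := Finset.mem_image.1 (hJ he)
    simp only [Finset.mem_filter] at hv
    exact hp1 v hv.2.1
  · refine (Finset.card_le_card hJ).trans (Finset.card_image_le.trans ?_)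
    simp

structure State {ι : Type} [Fintype ι] [Fintype V] (G : SimpleGraph V) (f : V → ℕ) (R : V → Prop)
    (π : V → V) (M : ℕ) (X : ι → Bool × List V) (E : Finset (Sym2 V)) (m : ℕ) : Prop where
  good : ∀ i, Good_s13 (X i)
  len : ∀ i, 2 ≤ (X i).2.length
  h1 : ∀ e, 0 < NN X e → e ∈ G.edgeSet
  h2 : ∀ v, 0 < SS X v → R v ∨ f (π v) < m
  h3 : ∀ v, ¬ R v → f (π v) < m → NN X s(v, π v) = 0
  h4 : ∀ e, (¬ ∃ v, ¬ R v ∧ e = s(v, π v)) → NN X e ≤ 1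
  h5 : ∀ e ∈ E, e ∈ G.edgeSet
  h6 : ∀ e ∈ G.edgeSet, 0 < NN X e ∨ e ∈ E ∨ ∃ v, ¬ R v ∧ f (π v) < m ∧ e = s(v, π v)
  h7 : E.card + (Finset.univ.filter (fun v => ¬ R v ∧ f (π v) < m ∧ SS X v = 0)).card ≤ M

lemma step {ι : Type} [Fintype ι] [Fintype V] (G : SimpleGraph V) (f : V → ℕ)
    (hf : Function.Injective f) (R : V → Prop)
    (π : V → V) (M : ℕ) (hadj : ∀ v, ¬ R v → G.Adj v (π v)) (hlt : ∀ v, ¬ R v → f (π v) < f v)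
    (hmin : ∀ v u, ¬ R v → G.Adj v u → f (π v) ≤ f u)
    (hroot : ∀ r p, R r → G.Adj r p → ¬ R p ∧ π p = r)
    (X : ι → Bool × List V) (E : Finset (Sym2 V)) (m : ℕ) (h : State G f R π M X E (m + 1)) :
    ∃ (X' : ι → Bool × List V) (E' : Finset (Sym2 V)), State G f R π M X' E' m := by
  obtain ⟨hG, hL, h1, h2, h3, h4, h5, h6, h7⟩ := h
  by_cases hp : ∃ p, f p = m
  swap
  · have hiff : ∀ v, f (π v) < m + 1 ↔ f (π v) < m := by
      intro v
      have : f (π v) ≠ m := fun h => hp ⟨_, h⟩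
      omega
    simp only [hiff] at h2 h3 h6 h7
    exact ⟨X, E, hG, hL, h1, h2, h3, h4, h5, h6, h7⟩
  obtain ⟨p, hpm⟩ := hp
  obtain ⟨St, hStd⟩ : ∃ St : ι → Bool → Prop,
      ∀ i σ, St i σ ↔ ∃ a, En (X i) σ = some a ∧ ¬ R a ∧ π a = p :=
    ⟨fun i σ => ∃ a, En (X i) σ = some a ∧ ¬ R a ∧ π a = p, fun _ _ => Iff.rfl⟩
  have hSS : ∀ i σ a, En (X i) σ = some a → 0 < SS X a := by
    intro i σ a ha
    have h1 : sc (X i) a ≤ SS X a :=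
      Finset.single_le_sum (f := fun i => sc (X i) a) (fun _ _ => Nat.zero_le _) (Finset.mem_univ i)
    have h2 : 0 < sc (X i) a := by
      cases σ <;> simp [sc, sv, ha]
    omega
  have hAiff : ∀ a, (∃ i σ, St i σ ∧ En (X i) σ = some a) ↔ (¬ R a ∧ π a = p ∧ 0 < SS X a) := by
    intro a
    constructor
    · rintro ⟨i, σ, hs, ha⟩
      obtain ⟨b, hb, hb1, hb2⟩ := (hStd i σ).1 hs
      rw [ha] at hb; cases hb
      exact ⟨hb1, hb2, hSS i σ a ha⟩
    · rintro ⟨hr, hπ, hs⟩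
      obtain ⟨i, σ, ha⟩ := exists_slot X a hs
      exact ⟨i, σ, (hStd i σ).2 ⟨a, ha, hr, hπ⟩, ha⟩
  have hneπ : ∀ a, ¬ R a → π a = p → a ≠ p := by
    rintro a hr hπ rfl
    have := hlt a hr; rw [hπ] at this; omega
  obtain ⟨X', hG', hlen, hNo, hA, hnA, hSp⟩ := core X hG p St
    (by
      intro i σ hs
      obtain ⟨a, ha, hr, hπ⟩ := (hStd i σ).1 hs
      refine ⟨a, ha, hneπ a hr hπ, ?_⟩
      have := h3 a hr (by rw [hπ]; omega)
      rwa [hπ] at this)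
    (fun i _ _ => hL i)
    (by
      intro w _
      by_cases hT : ∃ v, ¬ R v ∧ s(w, p) = s(v, π v)
      · obtain ⟨v, hv, he⟩ := hT
        have : NN X s(v, π v) = 0 := by
          apply h3 v hv
          have := hlt v hv
          rw [Sym2.eq_iff] at he
          rcases he with ⟨h1, h2⟩ | ⟨h1, h2⟩
          · rw [← h2]; omega
          · rw [h2] at hpm; omega
        rw [he]; omega
      · exact h4 _ hT)
  have hA1 : ∀ a, ¬ R a → π a = p → 0 < SS X a → NN X' s(a, p) = SS X a ∧ SS X' a = 0 := by
    intro a hr hπ hs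
    obtain ⟨e1, e2⟩ := hA a ((hAiff a).2 ⟨hr, hπ, hs⟩)
    have hcnt : ∑ s : ι × Bool, (if St s.1 s.2 then sv a (En (X s.1) s.2) else 0) = SS X a := by
      rw [Fintype.sum_prod_type]
      simp only [SS, sc]
      refine Finset.sum_congr rfl fun i _ => ?_
      have : ∀ σ, (if St i σ then sv a (En (X i) σ) else 0) = sv a (En (X i) σ) := by
        intro σ
        split_ifs with h
        · rfl
        · symm
          simp only [sv]
          rw [if_neg]
          intro ha
          exact h ((hStd i σ).2 ⟨a, ha, hr, hπ⟩)
      simp only [this]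
      rw [Fintype.sum_bool, add_comm]
    rw [hcnt] at e1 e2
    exact ⟨e1, by omega⟩
  have hB1 : ∀ w, w ≠ p → ¬ (¬ R w ∧ π w = p) → 0 < SS X w →
      NN X' s(w, p) = NN X s(w, p) ∧ SS X' w = SS X w := by
    intro w hw hn hs
    exact (hnA w hw (by rw [hAiff]; tauto)).1 hs
  have hB0 : ∀ w, w ≠ p → SS X w = 0 → NN X' s(w, p) + SS X' w = NN X s(w, p) := by
    intro w hw hs
    exact (hnA w hw (by rw [hAiff]; omega)).2 hs
  have hcase : ∀ e, p ∉ e ∨ e = s(p, p) ∨ ∃ w, w ≠ p ∧ e = s(w, p) := by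
    intro e
    by_cases hpe : p ∈ e
    · obtain ⟨w, rfl⟩ := Sym2.mem_iff_exists.1 hpe
      by_cases hw : w = p
      · subst hw; exact Or.inr (Or.inl rfl)
      · exact Or.inr (Or.inr ⟨w, hw, Sym2.eq_swap⟩)
    · exact Or.inl hpe
  have hdg : NN X' s(p, p) = 0 := good_diag X' hG' p
  have hle : ∀ w, w ≠ p → ¬ (¬ R w ∧ π w = p) → NN X' s(w, p) ≤ NN X s(w, p) := by
    intro w hw hn
    by_cases hs : 0 < SS X w
    · exact (hB1 w hw hn hs).1.le
    · have := hB0 w hw (by omega); omega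
  have hadj0 : ∀ w, 0 < NN X s(w, p) → G.Adj w p := fun w hw => h1 _ hw
  have hT0 : ∀ w, ¬ R w → π w = p → NN X s(w, p) = 0 := by
    intro w hr hπ
    have := h3 w hr (by rw [hπ]; omega)
    rwa [hπ] at this
  have hR0 : ∀ w, R w → NN X s(w, p) = 0 := by
    intro w hr
    by_contra h
    obtain ⟨h1, h2⟩ := hroot w p hr (hadj0 w (by omega))
    have h3' := h3 p h1 (by have := hlt p h1; omega)
    rw [h2, Sym2.eq_swap] at h3'
    exact h h3'
  have hmin0 : ∀ w, ¬ R w → 0 < NN X s(w, p) → f (π w) < m := by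
    intro w hr hN
    have h := hmin w p hr (hadj0 w hN)
    have : f (π w) ≠ m := by
      intro h'
      have := hT0 w hr (hf (by rw [h', hpm]))
      omega
    omega
  let Lst : Finset V := Finset.univ.filter
    (fun v => ¬ R v ∧ v ≠ p ∧ SS X v = 0 ∧ (π v = p ∨ 0 < SS X' v))
  have hLadj : ∀ w ∈ Lst, G.Adj w p ∧ f (π w) < m + 1 := by
    intro w hw
    simp only [Lst, Finset.mem_filter] at hw
    obtain ⟨-, hr, hwp, hs, hw⟩ := hw
    have hh : G.Adj w p := by
      rcases hw with hw | hw
      · rw [← hw]; exact hadj w hr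
      · have := hB0 w hwp hs
        exact hadj0 w (by omega)
    exact ⟨hh, by have := hmin w p hr hh; omega⟩
  refine ⟨X', E ∪ Lst.image (fun w => s(w, p)), hG', fun i => (hL i).trans (hlen i),
    ?_, ?_, ?_, ?_, ?_, ?_, ?_⟩
  · intro e he
    rcases hcase e with hc | rfl | ⟨w, hw, rfl⟩
    · rw [hNo e hc] at he; exact h1 e he
    · omega
    · by_cases hn : ¬ R w ∧ π w = p
      · have := hadj w hn.1
        rw [hn.2] at this
        exact this
      · exact h1 _ (lt_of_lt_of_le he (hle w hw hn))
  · intro v hv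
    by_cases hvR : R v
    · exact Or.inl hvR
    refine Or.inr ?_
    by_cases hvp : v = p
    · have := hlt v hvR
      subst hvp; omega
    by_cases hs : 0 < SS X v
    · by_cases hπ : π v = p
      · have := hA1 v hvR hπ hs; omega
      · have h := (h2 v hs).resolve_left hvR
        have : f (π v) ≠ m := fun h' => hπ (hf (by rw [h', hpm]))
        omega
    · have := hB0 v hvp (by omega)
      exact hmin0 v hvR (by omega)
  · intro v hvR hv
    have h30 := h3 v hvR (by omega)
    rcases hcase s(v, π v) with hc | hc | ⟨w, hw, hc⟩
    · rw [hNo _ hc]; exact h30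
    · rw [hc]; exact hdg
    · rw [hc] at h30 ⊢
      have hn : ¬ (¬ R w ∧ π w = p) := by
        rintro ⟨hr, hπ⟩
        have h8 := hlt w hr
        rw [hπ] at h8
        rw [Sym2.eq_iff] at hc
        rcases hc with ⟨h1, h2⟩ | ⟨h1, h2⟩
        · rw [h2] at hv; omega
        · rw [h2] at hv; omega
      have := hle w hw hn
      omega
  · intro e he
    rcases hcase e with hc | rfl | ⟨w, hw, rfl⟩
    · rw [hNo e hc]; exact h4 e he
    · omega
    · have hn : ¬ (¬ R w ∧ π w = p) := by
        rintro ⟨hr, hπ⟩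
        exact he ⟨w, hr, by rw [hπ]⟩
      exact (hle w hw hn).trans (h4 _ he)
  · intro e he
    rcases Finset.mem_union.1 he with he | he
    · exact h5 e he
    · obtain ⟨w, hw, rfl⟩ := Finset.mem_image.1 he
      exact (hLadj w hw).1
  · intro e he
    rcases h6 e he with hN | hE | ⟨v, hvR, hv, rfl⟩
    · rcases hcase e with hc | rfl | ⟨w, hw, rfl⟩
      · left; rw [hNo e hc]; exact hN
      · exact absurd he (by simp)
      · by_cases hr : R w
        · have := hR0 w hr; omega
        by_cases hs : 0 < SS X w
        · by_cases hπ : π w = p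
          · left; have := (hA1 w hr hπ hs).1; omega
          · left; rw [(hB1 w hw (by tauto) hs).1]; exact hN
        · have hb := hB0 w hw (by omega)
          by_cases hN' : 0 < NN X' s(w, p)
          · exact Or.inl hN'
          · right; left
            refine Finset.mem_union_right _ (Finset.mem_image.2 ⟨w, ?_, rfl⟩)
            simp only [Lst, Finset.mem_filter]
            exact ⟨Finset.mem_univ _, hr, hw, by omega, Or.inr (by omega)⟩
    · right; left; exact Finset.mem_union_left _ hE
    · by_cases hπ : π v = p
      · rw [hπ]
        by_cases hs : 0 < SS X v
        · left; rw [(hA1 v hvR hπ hs).1]; exact hs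
        · right; left
          refine Finset.mem_union_right _ (Finset.mem_image.2 ⟨v, ?_, rfl⟩)
          simp only [Lst, Finset.mem_filter]
          exact ⟨Finset.mem_univ _, hvR, hneπ v hvR hπ, by omega, Or.inl hπ⟩
      · right; right
        have : f (π v) ≠ m := fun h' => hπ (hf (by rw [h', hpm]))
        exact ⟨v, hvR, by omega, rfl⟩
  · have hc1 : (E ∪ Lst.image (fun w => s(w, p))).card ≤ E.card + Lst.card :=
      (Finset.card_union_le _ _).trans (by gcongr; exact Finset.card_image_le)
    have hdis : Disjoint Lst
        (Finset.univ.filter (fun v => ¬ R v ∧ f (π v) < m ∧ SS X' v = 0)) := by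
      rw [Finset.disjoint_left]
      intro w hw hw'
      simp only [Lst, Finset.mem_filter] at hw hw'
      rcases hw.2.2.2.2 with h | h
      · have := hw'.2.2.1; rw [h] at this; omega
      · omega
    have hsub : Lst ∪ (Finset.univ.filter (fun v => ¬ R v ∧ f (π v) < m ∧ SS X' v = 0)) ⊆
        (Finset.univ.filter (fun v => ¬ R v ∧ f (π v) < m + 1 ∧ SS X v = 0)) := by
      apply Finset.union_subset
      · intro w hw
        have h8 := (hLadj w hw).2
        simp only [Lst, Finset.mem_filter] at hw ⊢
        exact ⟨hw.1, hw.2.1, h8, hw.2.2.2.1⟩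
      · intro w hw
        simp only [Finset.mem_filter] at hw ⊢
        obtain ⟨hu, hr, hm, hs⟩ := hw
        refine ⟨hu, hr, by omega, ?_⟩
        by_cases hwp : w = p
        · subst hwp; omega
        · by_contra h0
          have hπ : π w ≠ p := by intro h; rw [h] at hm; omega
          have := (hB1 w hwp (by tauto) (by omega)).2
          omega
    have := Finset.card_le_card hsub
    rw [Finset.card_union_of_disjoint hdis] at this
    omega

lemma start [Fintype V] [Nonempty V] (G : SimpleGraph V) (f : V → ℕ) (R : V → Prop)
    (π : V → V) (hex : ∃ r, R r) (hadj : ∀ v, ¬ R v → G.Adj v (π v))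
    (hroot : ∀ r p, R r → G.Adj r p → ¬ R p ∧ π p = r) :
    ∃ (ι : Type) (_ : Fintype ι) (X : ι → Bool × List V) (E : Finset (Sym2 V)) (m : ℕ),
      2 * Fintype.card ι ≤ Fintype.card V - 1 ∧ State G f R π (Fintype.card V - 1) X E m := by
  obtain ⟨r0, hr0⟩ := hex
  let H : SimpleGraph V := G.deleteEdges {e | ∃ v, ¬ R v ∧ e = s(v, π v)}
  have hHG : ∀ a b, H.Adj a b → G.Adj a b ∧ ¬ ∃ v, ¬ R v ∧ s(a, b) = s(v, π v) := by
    intro a b h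
    have := (SimpleGraph.deleteEdges_adj).1 h
    exact this
  obtain ⟨f2, R2, hf2, hpar, -, huq⟩ := order H
  choose! par hpar1 hpar2 using hpar
  let E0 : Finset (Sym2 V) := Finset.univ.filter (fun e => e ∈ H.edgeSet)
  have hE0 : ∀ a b, s(a, b) ∈ E0 ↔ H.Adj a b := by intro a b; simp [E0]
  obtain ⟨J, hJ, hodd, hJc⟩ := jlem f2 hf2 R2 E0 par (fun v hv => (hE0 _ _).2 (hpar1 v hv)) hpar2
  let F : Finset (Sym2 V) := E0 \ J
  have hFE : ∀ e, e ∈ F → e ∈ E0 := fun e he => (Finset.mem_sdiff.1 he).1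
  let τ : V → ℕ := fun v => (F.filter (fun e => v ∈ e)).card % 2
  have hτ1 : ∀ v, τ v ≤ 1 := by intro v; simp only [τ]; omega
  have hτR : ∀ v, τ v = 0 → R2 v := by
    intro v hv
    by_contra h
    have := hodd v h
    simp only [τ, F] at hv
    omega
  have hτ0 : τ r0 = 0 := by
    have : F.filter (fun e => r0 ∈ e) = ∅ := by
      rw [Finset.filter_eq_empty_iff]
      intro e he hr
      obtain ⟨p, rfl⟩ := Sym2.mem_iff_exists.1 hr
      obtain ⟨h1, h2⟩ := hHG _ _ ((hE0 _ _).1 (hFE _ he))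
      obtain ⟨h3, h4⟩ := hroot r0 p hr0 h1
      exact h2 ⟨p, h3, by rw [h4, Sym2.eq_swap]⟩
    simp only [τ]; rw [this]; rfl
  obtain ⟨ι, hι, X, hG, hN, hS, hcard⟩ := lov (fun v => H.connectedComponentMk v) F.card F τ rfl
    (fun a h => H.irrefl ((hE0 _ _).1 (hFE _ h)))
    (fun a b h => SimpleGraph.ConnectedComponent.sound ((hE0 _ _).1 (hFE _ h)).reachable)
    (by intro v; simp only [τ]; omega)
    (by
      intro u v a b _ _ hu hv hk
      exact huq u v (hτR u hu) (hτR v hv) (SimpleGraph.ConnectedComponent.exact hk))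
  refine ⟨ι, hι, X, J, (∑ v, f v) + 1, ?_, hG, ?_, ?_, ?_, ?_, ?_, ?_, ?_, ?_⟩
  · rw [hcard, ← Finset.add_sum_erase _ τ (Finset.mem_univ r0), hτ0, zero_add]
    refine (Finset.sum_le_sum (fun v _ => hτ1 v)).trans ?_
    simp [Finset.card_erase_of_mem]
  · intro i
    obtain ⟨g1, g2, g3⟩ := hG i
    by_contra hlen
    have hlen0 : (X i).2.length ≠ 0 := by simpa using g2
    have hlen1 : (X i).2.length = 1 := by omega
    obtain ⟨a, ha⟩ := List.length_eq_one_iff.1 hlen1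
    have hb : ¬ (X i).1 = true := fun h => by have := g3 h; omega
    have h1 : sc (X i) a ≤ SS X a :=
      Finset.single_le_sum (f := fun i => sc (X i) a) (fun _ _ => Nat.zero_le _) (Finset.mem_univ i)
    have h2 : sc (X i) a = 2 := by simp [sc, sv, En, hb, ha]
    have := hS a; have := hτ1 a; omega
  · intro e he
    rw [hN] at he
    have he' : e ∈ F := by by_contra h; simp [h] at he
    induction e using Sym2.ind with
    | _ a b => exact (hHG _ _ ((hE0 _ _).1 (hFE _ he'))).1
  · intro v _
    right
    have : f (π v) ≤ ∑ v, f v :=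
      Finset.single_le_sum (f := f) (fun _ _ => Nat.zero_le _) (Finset.mem_univ (π v))
    omega
  · intro v hv _
    rw [hN, if_neg]
    intro h
    exact (hHG _ _ ((hE0 _ _).1 (hFE _ h))).2 ⟨v, hv, rfl⟩
  · intro e _
    rw [hN]; split_ifs <;> simp
  · intro e he
    have he' := hJ he
    induction e using Sym2.ind with
    | _ a b => exact (hHG _ _ ((hE0 _ _).1 he')).1
  · intro e he
    by_cases hT : ∃ v, ¬ R v ∧ e = s(v, π v)
    · obtain ⟨v, hv, h⟩ := hT
      have : f (π v) ≤ ∑ v, f v :=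
        Finset.single_le_sum (f := f) (fun _ _ => Nat.zero_le _) (Finset.mem_univ (π v))
      exact Or.inr (Or.inr ⟨v, hv, by omega, h⟩)
    · by_cases hJe : e ∈ J
      · exact Or.inr (Or.inl hJe)
      · left
        have : e ∈ F := by
          refine Finset.mem_sdiff.2 ⟨?_, hJe⟩
          induction e using Sym2.ind with
          | _ a b => exact (hE0 _ _).2 (SimpleGraph.deleteEdges_adj.2 ⟨he, hT⟩)
        rw [hN, if_pos this]; exact Nat.one_pos
  · have hsub : Finset.univ.filter (fun v => ¬ R v ∧ f (π v) < (∑ v, f v) + 1 ∧ SS X v = 0) ⊆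
        (Finset.univ.filter (fun v => R2 v)).erase r0 := by
      intro v hv
      simp only [Finset.mem_filter, Finset.mem_erase] at hv ⊢
      refine ⟨?_, hv.1, hτR v (by rw [← hS]; exact hv.2.2.2)⟩
      rintro rfl; exact hv.2.1 hr0
    have h1 := Finset.card_le_card hsub
    have hm : r0 ∈ Finset.univ.filter (fun v => R2 v) := by simp [hτR r0 hτ0]
    have h2 := Finset.card_erase_add_one hm
    have h3 := Finset.card_filter_add_card_filter_not (s := (Finset.univ : Finset V)) (fun v => R2 v)
    rw [Finset.card_univ] at h3
    omega

lemma walkOf (G : SimpleGraph V) : ∀ (t : List V) (a : V), (∀ e ∈ ed (a :: t), e ∈ G.edgeSet) →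
    ∃ (b : V) (w : G.Walk a b), (a :: t).getLast? = some b ∧ w.support = a :: t ∧
      w.edges = ed (a :: t) := by
  intro t
  induction t with
  | nil => intro a _; exact ⟨a, SimpleGraph.Walk.nil, rfl, rfl, rfl⟩
  | cons c t ih =>
    intro a h
    obtain ⟨b, w, h1, h2, h3⟩ := ih c (fun e he => h e (by simp [ed, he]))
    have hac : G.Adj a c := h s(a, c) (by simp [ed])
    refine ⟨b, SimpleGraph.Walk.cons hac w, ?_, ?_, ?_⟩
    · rw [List.getLast?_cons_cons]; exact h1
    · simp [h2]
    · simp [h3, ed]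

lemma cyc (G : SimpleGraph V) (x : Bool × List V) (hx : Good_s13 x) (hc : x.1 = true)
    (hG : ∀ e, 0 < ec x e → e ∈ G.edgeSet) :
    ∃ c : Σ v : V, G.Walk v v, c.2.IsCycle ∧ ∀ e, e ∈ c.2.edges ↔ 0 < ec x e := by
  obtain ⟨b0, l⟩ := x
  obtain ⟨hnd, hne, hlen⟩ := hx
  simp only at hc hnd hne hlen
  subst hc
  have hlen := hlen rfl
  match l, hne with
  | a :: t, _ =>
    have hG1 : ∀ e ∈ ed (a :: t), e ∈ G.edgeSet := by
      intro e he
      apply hG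
      have := List.count_pos_iff.2 he
      simp only [ec]; omega
    obtain ⟨b, w, h1, h2, h3⟩ := walkOf G t a hG1
    have hec : ∀ e, ec (true, a :: t) e = (ed (a :: t)).count e + if s(b, a) = e then 1 else 0 := by
      intro e
      simp only [ec, if_true, cle, h1, oe]
    have hba : G.Adj b a := hG s(b, a) (by rw [hec]; simp)
    refine ⟨⟨b, SimpleGraph.Walk.cons hba w⟩, ?_, ?_⟩
    · rw [SimpleGraph.Walk.cons_isCycle_iff]
      refine ⟨SimpleGraph.Walk.IsPath.mk' (by rw [h2]; exact hnd), ?_⟩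
      rw [h3]
      intro he
      match t with
      | [] => simp at hlen
      | [c] => simp at hlen
      | c :: d :: t =>
        simp only [ed.eq_3 a c, List.mem_cons] at he
        rcases he with he | he
        · have hbc : b = c := by
            rw [Sym2.eq_iff] at he
            rcases he with ⟨h, h'⟩ | ⟨h, _⟩
            · rw [h, h'] ; 
            · exact h
          have hb : b ∈ d :: t := by
            rw [List.getLast?_cons_cons, List.getLast?_cons_cons] at h1
            exact List.mem_of_getLast? h1
          rw [hbc] at hb
          exact (List.nodup_cons.1 (List.nodup_cons.1 hnd).2).1 hb
        · exact (List.nodup_cons.1 hnd).1 (mem_ed he a (by simp))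
    · intro e
      rw [hec, SimpleGraph.Walk.edges_cons, h3, List.mem_cons]
      by_cases h : s(b, a) = e
      · simp [h]
      · have : e ≠ s(b, a) := fun h' => h h'.symm
        simp [h, this, List.count_pos_iff]

theorem main [Fintype V] [Nonempty V] (G : SimpleGraph V) :
    ∃ (C : List (Σ v : V, G.Walk v v)) (E : List (Sym2 V)),
      2 * C.length ≤ Fintype.card V - 1 ∧ E.length ≤ Fintype.card V - 1 ∧
      (∀ c ∈ C, c.2.IsCycle) ∧
      (∀ e ∈ E, e ∈ G.edgeSet) ∧
      (∀ e : Sym2 V, e ∈ G.edgeSet ↔ (∃ c ∈ C, e ∈ c.2.edges) ∨ e ∈ E) := by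
  obtain ⟨f, R, hf, hdown, hRlt, hRuq⟩ := order G
  have hπ : ∀ v, ∃ u, ¬ R v → (G.Adj v u ∧ f u < f v ∧ ∀ u', G.Adj v u' → f u ≤ f u') := by
    intro v
    by_cases hv : R v
    · exact ⟨v, fun h => absurd hv h⟩
    · obtain ⟨u, hu, hlt⟩ := hdown v hv
      obtain ⟨w, hw, hmin⟩ := Finset.exists_min_image (Finset.univ.filter (fun u => G.Adj v u)) f
        ⟨u, by simp [hu]⟩
      simp only [Finset.mem_filter, Finset.mem_univ, true_and] at hw hmin
      exact ⟨w, fun _ => ⟨hw, lt_of_le_of_lt (hmin u hu) hlt, hmin⟩⟩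
  choose π hπ using hπ
  have hroot : ∀ r p, R r → G.Adj r p → ¬ R p ∧ π p = r := by
    intro r p hr ha
    have hp : ¬ R p := fun hp => ha.ne (hRuq r p hr hp ha.reachable)
    obtain ⟨h1, h2, h3⟩ := hπ p hp
    refine ⟨hp, ?_⟩
    have h4 := h3 r ha.symm
    have h5 : R (π p) := by
      by_contra h
      have := hRlt r (π p) hr h
      omega
    exact hRuq _ _ h5 hr (h1.symm.reachable.trans ha.symm.reachable)
  have hex : ∃ r, R r := by
    obtain ⟨r, -, hr⟩ := Finset.exists_min_image (Finset.univ : Finset V) f Finset.univ_nonempty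
    refine ⟨r, ?_⟩
    by_contra h
    obtain ⟨u, _, hu⟩ := hdown r h
    have := hr u (Finset.mem_univ _)
    omega
  obtain ⟨ι, hι, X, E, m, hcard, hst⟩ := start G f R π hex (fun v hv => (hπ v hv).1) hroot
  have hfin : ∀ m (X : ι → Bool × List V) (E : Finset (Sym2 V)),
      State G f R π (Fintype.card V - 1) X E m → ∃ (X' : ι → Bool × List V) (E' : Finset (Sym2 V)),
        State G f R π (Fintype.card V - 1) X' E' 0 := by
    intro m
    induction m with
    | zero => intro X E h; exact ⟨X, E, h⟩
    | succ m ih =>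
      intro X E h
      obtain ⟨X', E', h'⟩ := step G f hf R π _ (fun v hv => (hπ v hv).1) (fun v hv => (hπ v hv).2.1)
        (fun v u hv => (hπ v hv).2.2 u) hroot X E m h
      exact ih X' E' h'
  obtain ⟨X, E, hst⟩ := hfin m X E hst
  obtain ⟨hG, hL, h1, h2, h3, h4, h5, h6, h7⟩ := hst
  have hecN : ∀ i e, ec (X i) e ≤ NN X e := fun i e =>
    Finset.single_le_sum (f := fun i => ec (X i) e) (fun _ _ => Nat.zero_le _) (Finset.mem_univ i)
  have hecG : ∀ i e, 0 < ec (X i) e → e ∈ G.edgeSet := fun i e he =>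
    h1 e (lt_of_lt_of_le he (hecN i e))
  have hclosed : ∀ i, (X i).1 = true := by
    intro i
    by_contra hop
    have hlen := hL i
    obtain ⟨hnd, hne, -⟩ := hG i
    have hgx := hecG i
    have hEn : ∀ σ a, En (X i) σ = some a → R a := by
      intro σ a ha
      have h8 : sc (X i) a ≤ SS X a :=
        Finset.single_le_sum (f := fun i => sc (X i) a) (fun _ _ => Nat.zero_le _) (Finset.mem_univ i)
      have h9 : 0 < sc (X i) a := by
        cases σ <;> simp [sc, sv, ha]
      rcases h2 a (by omega) with h | h
      · exact h
      · omega
    generalize X i = x at *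
    obtain ⟨b0, l⟩ := x
    simp only at hop hlen hnd hne
    match l with
    | [] => simp at hlen
    | [a] => simp at hlen
    | a :: c :: t =>
      obtain ⟨b, w, g1, -, -⟩ := walkOf G (c :: t) a (by
        intro e he
        apply hgx
        have := List.count_pos_iff.2 he
        simp only [ec]; omega)
      have ha := hEn false a (by simp [En, hop])
      have hb := hEn true b (by simp only [En, hop]; simpa using g1)
      have hab := hRuq a b ha hb w.reachable
      rw [List.getLast?_cons_cons] at g1
      have := List.mem_of_getLast? g1
      rw [← hab] at this
      exact (List.nodup_cons.1 hnd).1 this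
  choose c hc1 hc2 using fun i => cyc G (X i) (hG i) (hclosed i) (hecG i)
  refine ⟨(Finset.univ : Finset ι).toList.map c, E.toList, ?_, ?_, ?_, ?_, ?_⟩
  · simpa using hcard
  · rw [Finset.length_toList]; omega
  · intro d hd
    obtain ⟨i, -, rfl⟩ := List.mem_map.1 hd
    exact hc1 i
  · intro e he
    exact h5 e (Finset.mem_toList.1 he)
  · intro e
    constructor
    · intro he
      rcases h6 e he with h | h | ⟨v, _, h, _⟩
      · left
        have : ∃ i, 0 < ec (X i) e := by
          by_contra hn
          push Not at hn
          have : NN X e = 0 := Finset.sum_eq_zero fun i _ => Nat.le_zero.1 (hn i)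
          omega
        obtain ⟨i, hi⟩ := this
        exact ⟨c i, List.mem_map.2 ⟨i, by simp, rfl⟩, (hc2 i e).2 hi⟩
      · right; exact Finset.mem_toList.2 h
      · omega
    · rintro (⟨d, hd, he⟩ | he)
      · exact SimpleGraph.Walk.edges_subset_edgeSet _ he
      · exact h5 e (Finset.mem_toList.1 he)
end Pyb

end PybSection


/-- Pyber: every simple graph on n vertices with no cycle of
length 4 can be covered by at most ⌊(n−1)/2⌋ cycles together with at most
n − 1 single edges. -/
theorem stmt_13 (n : ℕ) (G : SimpleGraph (Fin n))
    (hC4 : ∀ (v : Fin n) (w : G.Walk v v), w.IsCycle → w.length ≠ 4) :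
    ∃ (C : List (Σ v : Fin n, G.Walk v v)) (E : List (Sym2 (Fin n))),
      C.length ≤ (n - 1) / 2 ∧ E.length ≤ n - 1 ∧
      (∀ c ∈ C, c.2.IsCycle) ∧
      (∀ e ∈ E, e ∈ G.edgeSet) ∧
      (∀ e : Sym2 (Fin n), e ∈ G.edgeSet ↔ (∃ c ∈ C, e ∈ c.2.edges) ∨ e ∈ E) := by

  rcases Nat.eq_zero_or_pos n with h0 | hn
  · subst h0
    refine ⟨[], [], by simp, by simp, by simp, by simp, ?_⟩
    intro e
    induction e using Sym2.ind with
    | _ a b => exact a.elim0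
  · haveI : Nonempty (Fin n) := ⟨⟨0, hn⟩⟩
    obtain ⟨C, E, h1, h2, h3, h4, h5⟩ := Pyb.main G
    rw [Fintype.card_fin] at h1 h2
    exact ⟨C, E, by omega, h2, h3, h4, h5⟩
end
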